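/- arXiv:1902.00368 — 2 statements merged into one kernel-verified Lean document; each statement's English description precedes it below -/
import Mathlib

section
/- Let b ∈ (0,1), c, τ > 0, and let φ : ℝ → ℝ be a nondecreasing, non-constant, bounded, twice continuously differentiable solution of the profile equation φ''(t) − c·φ'(t) + (Bφ)(t)·(1 − (1−b)·(SBφ)(t)) = 0 with φ(−∞) = 0 and φ(+∞) = 1. Then: (i) φ'(t) > 0 for all t ∈ ℝ; (ii) the characteristic function χ₀ has positive real zeros λ₂ ≤ λ₁; and (iii) there exist ε > 0, t_a ∈ ℝ, d ∈ ℝ such that, as t → −∞: if λ₂ < λ₁ then φ(t + t_a) = e^{λ₂·t}·(1 + o(e^{ε·t})), while if λ₂ = λ₁ then φ(t + t_a) = e^{λ₂·t}·(−t + d + o(e^{ε·t})). -/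
open Filter Asymptotics

/-- Characteristic function χ₀(z) = z² − c·z + 1/(1 − b·e^{−z·c·τ}). -/
noncomputable def chi0 (b c τ z : ℝ) : ℝ :=
  z ^ 2 - c * z + 1 / (1 - b * Real.exp (-(z * c * τ)))

/-- `(Bφ)(t) = Σ_{j≥0} b^j φ(t − j·c·τ)`. -/
noncomputable def Bop (b c τ : ℝ) (φ : ℝ → ℝ) (t : ℝ) : ℝ :=
  ∑' j : ℕ, b ^ j * φ (t - (j : ℝ) * c * τ)

/-- `(SBφ)(t) = Σ_{j≥0} b^j φ(t − (j+1)·c·τ)`. -/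
noncomputable def SBop (b c τ : ℝ) (φ : ℝ → ℝ) (t : ℝ) : ℝ :=
  ∑' j : ℕ, b ^ j * φ (t - ((j : ℝ) + 1) * c * τ)

open MeasureTheory

/-- The hypotheses on a wave profile, bundled. -/
structure IsProfile (b c τ : ℝ) (φ : ℝ → ℝ) : Prop where
  b_mem : b ∈ Set.Ioo (0 : ℝ) 1
  c_pos : 0 < c
  τ_pos : 0 < τ
  mono : Monotone φ
  smooth : ContDiff ℝ 2 φ
  eqn : ∀ t : ℝ, deriv (deriv φ) t - c * deriv φ t
      + Bop b c τ φ t * (1 - (1 - b) * SBop b c τ φ t) = 0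
  tendsto_atBot : Tendsto φ atBot (nhds 0)
  tendsto_atTop : Tendsto φ atTop (nhds 1)

lemma hasDerivAt_exp_neg_mul (a t : ℝ) :
    HasDerivAt (fun t => Real.exp (-(a * t))) (Real.exp (-(a * t)) * -a) t := by
  refine HasDerivAt.exp ?_
  simpa using ((hasDerivAt_id' t).const_mul a).fun_neg

namespace IsProfile

variable {b c τ : ℝ} {φ : ℝ → ℝ}

lemma nonneg (P : IsProfile b c τ φ) (t : ℝ) : 0 ≤ φ t := P.mono.le_of_tendsto P.tendsto_atBot t

lemma le_one (P : IsProfile b c τ φ) (t : ℝ) : φ t ≤ 1 := P.mono.ge_of_tendsto P.tendsto_atTop t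

lemma delay_nonneg (P : IsProfile b c τ φ) (j : ℕ) : 0 ≤ (j : ℝ) * c * τ := by
  have := P.c_pos; have := P.τ_pos; positivity

lemma one_sub_pos (P : IsProfile b c τ φ) : 0 < 1 - b := by linarith [P.b_mem.2]

lemma summable_pow (P : IsProfile b c τ φ) : Summable fun j : ℕ => b ^ j :=
  summable_geometric_of_lt_one P.b_mem.1.le P.b_mem.2

lemma summable_Bop (P : IsProfile b c τ φ) (t : ℝ) :
    Summable fun j : ℕ => b ^ j * φ (t - (j : ℝ) * c * τ) := by
  refine P.summable_pow.of_nonneg_of_le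
    (fun j => mul_nonneg (pow_nonneg P.b_mem.1.le j) (P.nonneg _)) fun j => ?_
  exact mul_le_of_le_one_right (pow_nonneg P.b_mem.1.le j) (P.le_one _)

lemma Bop_le (P : IsProfile b c τ φ) {t M : ℝ} (h : φ t ≤ M) : Bop b c τ φ t ≤ M / (1 - b) := by
  have hs : HasSum (fun j : ℕ => b ^ j * M) ((1 - b)⁻¹ * M) :=
    (hasSum_geometric_of_lt_one P.b_mem.1.le P.b_mem.2).mul_right M
  have := (P.summable_Bop t).tsum_le_tsum (fun j => mul_le_mul_of_nonneg_left
    ((P.mono (by linarith [P.delay_nonneg j])).trans h) (pow_nonneg P.b_mem.1.le j)) hs.summable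
  rw [hs.tsum_eq] at this
  rw [div_eq_inv_mul]
  exact this

lemma self_le_Bop (P : IsProfile b c τ φ) (t : ℝ) : φ t ≤ Bop b c τ φ t := by
  have := (P.summable_Bop t).le_tsum 0
    fun j _ => mul_nonneg (pow_nonneg P.b_mem.1.le j) (P.nonneg _)
  simpa [Bop] using this

lemma Bop_nonneg (P : IsProfile b c τ φ) (t : ℝ) : 0 ≤ Bop b c τ φ t :=
  (P.nonneg t).trans (P.self_le_Bop t)

lemma SBop_eq (t : ℝ) : SBop b c τ φ t = Bop b c τ φ (t - c * τ) := by
  unfold SBop Bop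
  congr 1; ext j; congr 2; ring

lemma continuous_Bop (P : IsProfile b c τ φ) : Continuous (Bop b c τ φ) := by
  refine continuous_tsum (u := fun j : ℕ => b ^ j) (fun j => ?_) P.summable_pow fun j t => ?_
  · have := P.smooth.continuous
    fun_prop
  · rw [Real.norm_eq_abs, abs_of_nonneg (mul_nonneg (pow_nonneg P.b_mem.1.le j) (P.nonneg _))]
    exact mul_le_of_le_one_right (pow_nonneg P.b_mem.1.le j) (P.le_one _)

lemma hasDerivAt (P : IsProfile b c τ φ) (t : ℝ) : HasDerivAt φ (deriv φ t) t :=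
  (P.smooth.differentiable (by norm_num) t).hasDerivAt

lemma hasDerivAt_deriv (P : IsProfile b c τ φ) (t : ℝ) :
    HasDerivAt (deriv φ) (deriv (deriv φ) t) t := by
  have : ContDiff ℝ 1 (deriv φ) := by
    have h := P.smooth
    rw [show (2 : WithTop ℕ∞) = 1 + 1 by norm_num, contDiff_succ_iff_deriv] at h
    exact h.2.2
  exact (this.differentiable (by norm_num) t).hasDerivAt

lemma deriv_nonneg (P : IsProfile b c τ φ) (t : ℝ) : 0 ≤ deriv φ t := P.mono.deriv_nonneg

lemma SBop_le (P : IsProfile b c τ φ) (t : ℝ) : (1 - b) * SBop b c τ φ t ≤ 1 := by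
  have := P.Bop_le (P.le_one (t - c * τ))
  rw [← SBop_eq, le_div_iff₀ P.one_sub_pos] at this
  linarith

lemma SBop_nonneg (P : IsProfile b c τ φ) (t : ℝ) : 0 ≤ SBop b c τ φ t := by
  rw [SBop_eq]; exact P.Bop_nonneg _

/-- The reaction term is nonnegative. -/
lemma reaction_nonneg (P : IsProfile b c τ φ) (t : ℝ) :
    0 ≤ Bop b c τ φ t * (1 - (1 - b) * SBop b c τ φ t) :=
  mul_nonneg (P.Bop_nonneg t) (by linarith [P.SBop_le t])

lemma deriv_pos (P : IsProfile b c τ φ) (t₀ : ℝ) : 0 < deriv φ t₀ := by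
  refine lt_of_le_of_ne (P.deriv_nonneg t₀) fun h0 => ?_
  have hd (t : ℝ) : HasDerivAt (fun t => deriv φ t * Real.exp (-(c * t)))
      (deriv (deriv φ) t * Real.exp (-(c * t)) + deriv φ t * (Real.exp (-(c * t)) * -c)) t := by
    exact (P.hasDerivAt_deriv t).mul (hasDerivAt_exp_neg_mul _ t)
  have hanti : Antitone fun t => deriv φ t * Real.exp (-(c * t)) := by
    refine antitone_of_deriv_nonpos (fun t => (hd t).differentiableAt) fun t => ?_
    rw [(hd t).deriv]
    have := P.eqn t
    have := P.reaction_nonneg t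
    have := Real.exp_pos (-(c * t))
    nlinarith
  have hz (t : ℝ) (ht : t₀ ≤ t) : deriv φ t = 0 := by
    have := hanti ht
    simp only [← h0, zero_mul] at this
    exact le_antisymm (nonpos_of_mul_nonpos_left this (Real.exp_pos _)) (P.deriv_nonneg t)
  have hconst (t : ℝ) (ht : t₀ ≤ t) : φ t = φ t₀ :=
    constant_of_derivWithin_zero (P.smooth.differentiable (by norm_num)).differentiableOn
      (fun x hx => by
        rw [(P.hasDerivAt x).differentiableAt.derivWithin
          (uniqueDiffOn_Icc (hx.1.trans_lt hx.2) x ⟨hx.1, hx.2.le⟩)]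
        exact hz x hx.1) t ⟨ht, le_rfl⟩
  have h1 (t : ℝ) (ht : t₀ ≤ t) : φ t = 1 := by
    rw [hconst t ht]
    refine tendsto_nhds_unique (tendsto_const_nhds.congr' ?_) P.tendsto_atTop
    filter_upwards [eventually_ge_atTop t₀] with s hs using (hconst s hs).symm
  have hdd : deriv (deriv φ) (t₀ + 1) = 0 := by
    have : deriv φ =ᶠ[nhds (t₀ + 1)] fun _ => 0 := by
      filter_upwards [eventually_gt_nhds (show t₀ < t₀ + 1 by linarith)] with s hs using hz s hs.le
    rw [this.deriv_eq, deriv_const]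
  have hB : 1 ≤ Bop b c τ φ (t₀ + 1) := by
    exact (h1 (t₀ + 1) (by linarith)).symm.le.trans (P.self_le_Bop _)
  have heq := P.eqn (t₀ + 1)
  rw [hdd, hz (t₀ + 1) (by linarith)] at heq
  have hS : (1 - b) * SBop b c τ φ (t₀ + 1) = 1 := by
    have : Bop b c τ φ (t₀ + 1) * (1 - (1 - b) * SBop b c τ φ (t₀ + 1)) = 0 := by linarith
    rcases mul_eq_zero.1 this with h | h <;> linarith
  have hall (j : ℕ) : φ (t₀ + 1 - c * τ - (j : ℝ) * c * τ) = 1 := by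
    by_contra hne
    have hlt := lt_of_le_of_ne (P.le_one _) hne
    have hg := hasSum_geometric_of_lt_one P.b_mem.1.le P.b_mem.2
    have hle : (fun j : ℕ => b ^ j * φ (t₀ + 1 - c * τ - (j : ℝ) * c * τ)) ≤ fun j => b ^ j :=
      fun j => mul_le_of_le_one_right (pow_nonneg P.b_mem.1.le j) (P.le_one _)
    have := Summable.tsum_lt_tsum hle
      (mul_lt_of_lt_one_right (pow_pos P.b_mem.1 j) hlt) (P.summable_Bop _) hg.summable
    rw [hg.tsum_eq] at this
    rw [SBop_eq, Bop] at hS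
    have h2 := mul_lt_mul_of_pos_left this P.one_sub_pos
    rw [hS, mul_inv_cancel₀ P.one_sub_pos.ne'] at h2
    exact lt_irrefl _ h2
  have hlim : Tendsto (fun j : ℕ => t₀ + 1 - c * τ - (j : ℝ) * c * τ) atTop atBot := by
    have : Tendsto (fun j : ℕ => (j : ℝ) * (c * τ)) atTop atTop :=
      tendsto_natCast_atTop_atTop.atTop_mul_const (mul_pos P.c_pos P.τ_pos)
    refine (tendsto_atBot_add_const_left _ (t₀ + 1 - c * τ)
      (tendsto_neg_atTop_atBot.comp this)).congr fun j => ?_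
    simp only [Function.comp]; ring
  have := P.tendsto_atBot.comp hlim
  simp only [Function.comp_def, hall] at this
  exact one_ne_zero (tendsto_nhds_unique tendsto_const_nhds this)

lemma pos (P : IsProfile b c τ φ) (t : ℝ) : 0 < φ t :=
  (P.nonneg (t - 1)).trans_lt (strictMono_of_deriv_pos P.deriv_pos (by linarith))

lemma hasDerivAt_flux (P : IsProfile b c τ φ) (t : ℝ) :
    HasDerivAt (fun t => c * φ t - deriv φ t)
      (Bop b c τ φ t * (1 - (1 - b) * SBop b c τ φ t)) t := by
  refine (((P.hasDerivAt t).const_mul c).sub (P.hasDerivAt_deriv t)).congr_deriv ?_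
  linarith [P.eqn t]

lemma deriv_le (P : IsProfile b c τ φ) (t₀ : ℝ) : deriv φ t₀ ≤ c * φ t₀ := by
  by_contra! hlt
  set η := deriv φ t₀ - c * φ t₀
  have hη : 0 < η := sub_pos.2 hlt
  have hmono : Monotone fun t => c * φ t - deriv φ t :=
    monotone_of_deriv_nonneg (fun t => (P.hasDerivAt_flux t).differentiableAt)
      fun t => by rw [(P.hasDerivAt_flux t).deriv]; exact P.reaction_nonneg t
  have hge (t : ℝ) (ht : t ≤ t₀) : η ≤ deriv φ t := by
    have h1 := hmono ht
    have h2 := mul_nonneg P.c_pos.le (P.nonneg t)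
    simp only [η] at *
    linarith
  set s := t₀ - 2 / η
  have hs : s < t₀ := by have : 0 < 2 / η := by positivity
                         simp only [s]; linarith
  obtain ⟨x, hx, hxe⟩ := exists_deriv_eq_slope φ hs P.smooth.continuous.continuousOn
    (P.smooth.differentiable (by norm_num)).differentiableOn
  have h1 := hge x hx.2.le
  rw [hxe, le_div_iff₀ (by linarith)] at h1
  have : η * (t₀ - s) = 2 := by simp only [s]; field_simp; ring
  linarith [P.nonneg s, P.le_one t₀]

lemma antitone_mul_exp (P : IsProfile b c τ φ) : Antitone fun t => φ t * Real.exp (-(c * t)) := by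
  have hd (t : ℝ) : HasDerivAt (fun t => φ t * Real.exp (-(c * t)))
      (deriv φ t * Real.exp (-(c * t)) + φ t * (Real.exp (-(c * t)) * -c)) t := by
    exact (P.hasDerivAt t).mul (hasDerivAt_exp_neg_mul _ t)
  refine antitone_of_deriv_nonpos (fun t => (hd t).differentiableAt) fun t => ?_
  rw [(hd t).deriv]
  have := P.deriv_le t
  have := Real.exp_pos (-(c * t))
  nlinarith

/-- The rates `σ` for which `φ` is dominated by a multiple of `exp (σ t)`. -/
def rates (φ : ℝ → ℝ) : Set ℝ := {σ | 0 < σ ∧ ∃ C, ∀ t, φ t ≤ C * Real.exp (σ * t)}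

lemma mem_rates_of_le (P : IsProfile b c τ φ) {σ C T : ℝ} (hσ : 0 < σ)
    (h : ∀ t ≤ T, φ t ≤ C * Real.exp (σ * t)) : σ ∈ rates φ := by
  refine ⟨hσ, max C (Real.exp (-(σ * T))), fun t => ?_⟩
  rcases le_total t T with ht | ht
  · exact (h t ht).trans (mul_le_mul_of_nonneg_right (le_max_left _ _) (Real.exp_pos _).le)
  · calc φ t ≤ 1 := P.le_one t
      _ ≤ Real.exp (-(σ * T)) * Real.exp (σ * t) := by
        rw [← Real.exp_add]; apply Real.one_le_exp; nlinarith
      _ ≤ _ := mul_le_mul_of_nonneg_right (le_max_right _ _) (Real.exp_pos _).le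

lemma rates_nonempty (P : IsProfile b c τ φ) : (rates φ).Nonempty := by
  have hev : ∀ᶠ t in atBot, φ t < 1 / 2 := P.tendsto_atBot.eventually (gt_mem_nhds (by norm_num))
  obtain ⟨T, hT⟩ := eventually_atBot.1 hev
  have hc := P.c_pos
  have hR (t : ℝ) (ht : t ≤ T) : φ t / 2 ≤ Bop b c τ φ t * (1 - (1 - b) * SBop b c τ φ t) := by
    have h1 : SBop b c τ φ t ≤ (1 / 2) / (1 - b) := by
      rw [SBop_eq]
      exact P.Bop_le (hT _ (by nlinarith [P.τ_pos, mul_pos P.c_pos P.τ_pos])).le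
    rw [le_div_iff₀ P.one_sub_pos] at h1
    nlinarith [P.self_le_Bop t, P.nonneg t]
  set F := fun t => c * φ t - deriv φ t
  have hF0 (t : ℝ) : 0 ≤ F t := by simpa [F] using P.deriv_le t
  have hd (t : ℝ) : HasDerivAt (fun t => F t * Real.exp (-(1 / (2 * c) * t)))
      (Bop b c τ φ t * (1 - (1 - b) * SBop b c τ φ t) * Real.exp (-(1 / (2 * c) * t))
        + F t * (Real.exp (-(1 / (2 * c) * t)) * -(1 / (2 * c)))) t := by
    exact (P.hasDerivAt_flux t).mul (hasDerivAt_exp_neg_mul _ t)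
  have hm : MonotoneOn (fun t => F t * Real.exp (-(1 / (2 * c) * t))) (Set.Iic T) := by
    refine monotoneOn_of_deriv_nonneg (convex_Iic T)
      (fun t _ => (hd t).continuousAt.continuousWithinAt)
      (fun t _ => (hd t).differentiableAt.differentiableWithinAt) fun t ht => ?_
    rw [interior_Iic] at ht
    rw [(hd t).deriv]
    have h1 := hR t ht.le
    have h2 := P.deriv_nonneg t
    have h3 : F t * (1 / (2 * c)) ≤ φ t / 2 := by
      simp only [F]; field_simp; linarith
    have := Real.exp_pos (-(1 / (2 * c) * t))
    nlinarith
  have hFb (t : ℝ) (ht : t ≤ T) : F t ≤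
      F T * Real.exp (-(1 / (2 * c) * T)) * Real.exp (1 / (2 * c) * t) := by
    have := hm (Set.mem_Iic.2 ht) (Set.mem_Iic.2 le_rfl) ht
    have := mul_le_mul_of_nonneg_right this (Real.exp_pos (1 / (2 * c) * t)).le
    simpa only [mul_assoc, ← Real.exp_add, neg_add_cancel, Real.exp_zero, mul_one] using this
  refine ⟨1 / (2 * c), P.mem_rates_of_le (T := T - 1) (by positivity)
    (C := 2 * (F T * Real.exp (-(1 / (2 * c) * T)) * Real.exp (1 / (2 * c)))) fun t ht => ?_⟩
  obtain ⟨x, hx, hxe⟩ := exists_hasDerivAt_eq_slope F _ (show t < t + 1 by linarith)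
    (fun x _ => (P.hasDerivAt_flux x).continuousAt.continuousWithinAt)
    fun x _ => P.hasDerivAt_flux x
  have h1 := hR x (by linarith [hx.2])
  have h2 := P.mono hx.1.le
  have h3 := hFb (t + 1) (by linarith)
  rw [mul_add, mul_one, add_comm, Real.exp_add] at h3
  simp only [add_sub_cancel_left, div_one] at hxe
  have := hF0 t
  rw [add_comm 1 t] at h3
  nlinarith

lemma rates_le (P : IsProfile b c τ φ) {σ : ℝ} (hσ : σ ∈ rates φ) : σ ≤ c := by
  obtain ⟨-, C, hC⟩ := hσ
  by_contra! hlt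
  have h1 (t : ℝ) (ht : t ≤ 0) : φ 0 ≤ C * Real.exp ((σ - c) * t) := by
    have h2 := P.antitone_mul_exp ht
    have h3 := mul_le_mul_of_nonneg_right (hC t) (Real.exp_pos (-(c * t))).le
    rw [mul_assoc, ← Real.exp_add] at h3
    simp only [mul_zero, neg_zero, Real.exp_zero, mul_one] at h2
    refine h2.trans (h3.trans_eq ?_)
    congr 2; ring
  have h2 : Tendsto (fun t => C * Real.exp ((σ - c) * t)) atBot (nhds (C * 0)) :=
    (Real.tendsto_exp_atBot.comp (tendsto_id.const_mul_atBot (sub_pos.2 hlt))).const_mul C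
  have h3 := ge_of_tendsto h2 (by filter_upwards [eventually_le_atBot 0] with t ht using h1 t ht)
  linarith [P.pos 0]

end IsProfile

open ProbabilityTheory in
/-- **Landau's theorem** for moment generating functions: if the complex moment generating function
of a nonnegative variable extends holomorphically to a disc centred at a real point `x₀`, then the
exponential moments are finite up to the right end of that disc. -/
lemma mem_integrableExpSet_of_differentiableOn {Ω : Type*} {m : MeasurableSpace Ω} {μ : Measure Ω}
    {X : Ω → ℝ} (hX : 0 ≤ᵐ[μ] X) {x₀ r w : ℝ} (hx₀ : x₀ ∈ interior (integrableExpSet X μ))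
    {G : ℂ → ℂ} (hG : DifferentiableOn ℂ G (Metric.ball (x₀ : ℂ) r))
    (hGX : G =ᶠ[nhds (x₀ : ℂ)] complexMGF X μ) (hw : 0 ≤ w) (hwr : w < r) :
    x₀ + w ∈ integrableExpSet X μ := by
  have hXm : AEMeasurable X μ := aemeasurable_of_mem_interior_integrableExpSet hx₀
  set a : ℕ → ℝ := fun n => ∫ ω, X ω ^ n * Real.exp (x₀ * X ω) ∂μ
  have hcoef (n : ℕ) : iteratedDeriv n G (x₀ : ℂ) = (a n : ℂ) := by
    rw [hGX.iteratedDeriv_eq n, iteratedDeriv_complexMGF (by simpa using hx₀),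
      ← integral_complex_ofReal]
    congr 1; ext ω; push_cast; rfl
  have hmem : ((x₀ + w : ℝ) : ℂ) ∈ Metric.ball (x₀ : ℂ) r := by
    rw [Metric.mem_ball, dist_eq_norm]
    push_cast
    rw [add_sub_cancel_left, Complex.norm_real, Real.norm_of_nonneg hw]
    exact hwr
  have hsumC := (Complex.hasSum_taylorSeries_on_ball hG hmem).summable
  have hsum : Summable fun n : ℕ => (n.factorial : ℝ)⁻¹ * w ^ n * a n := by
    rw [← Complex.summable_ofReal]
    refine hsumC.congr fun n => ?_
    rw [hcoef]; push_cast; simp only [smul_eq_mul, add_sub_cancel_left]; ring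
  have ha (n : ℕ) : 0 ≤ a n := integral_nonneg_of_ae (by
    filter_upwards [hX] with ω hω using mul_nonneg (pow_nonneg hω n) (Real.exp_pos _).le)
  refine ⟨by fun_prop, ?_⟩
  rw [hasFiniteIntegral_iff_ofReal (ae_of_all _ fun ω => (Real.exp_pos _).le)]
  have hexp : ∀ᵐ ω ∂μ, ENNReal.ofReal (Real.exp ((x₀ + w) * X ω)) =
      ∑' n : ℕ, ENNReal.ofReal ((n.factorial : ℝ)⁻¹ * w ^ n) *
        ENNReal.ofReal (X ω ^ n * Real.exp (x₀ * X ω)) := by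
    filter_upwards [hX] with ω hω
    have h : HasSum (fun n : ℕ => (w * X ω) ^ n / n.factorial) (Real.exp (w * X ω)) := by
      rw [Real.exp_eq_exp_ℝ]
      exact NormedSpace.expSeries_div_hasSum_exp (w * X ω)
    replace h := h.mul_right (Real.exp (x₀ * X ω))
    rw [← Real.exp_add, show w * X ω + x₀ * X ω = (x₀ + w) * X ω by ring] at h
    rw [← h.tsum_eq, ENNReal.ofReal_tsum_of_nonneg (fun n => ?_) h.summable]
    · congr 1; ext n
      rw [← ENNReal.ofReal_mul (by positivity)]
      congr 1; rw [mul_pow]; field_simp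
    · have : 0 ≤ X ω := hω
      positivity
  rw [lintegral_congr_ae hexp, lintegral_tsum (fun n => by fun_prop)]
  have hterm (n : ℕ) : ∫⁻ ω, ENNReal.ofReal ((n.factorial : ℝ)⁻¹ * w ^ n) *
      ENNReal.ofReal (X ω ^ n * Real.exp (x₀ * X ω)) ∂μ =
      ENNReal.ofReal ((n.factorial : ℝ)⁻¹ * w ^ n * a n) := by
    rw [lintegral_const_mul' _ _ ENNReal.ofReal_ne_top, ← ofReal_integral_eq_lintegral_ofReal
      (integrable_pow_mul_exp_of_mem_interior_integrableExpSet hx₀ n),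
      ← ENNReal.ofReal_mul (by positivity)]
    filter_upwards [hX] with ω hω using mul_nonneg (pow_nonneg hω n) (Real.exp_pos _).le
  simp_rw [hterm]
  rw [← ENNReal.ofReal_tsum_of_nonneg (fun n => mul_nonneg (by positivity) (ha n)) hsum]
  exact ENNReal.ofReal_lt_top

/-- The two-sided Laplace transform. -/
noncomputable def laplace (f : ℝ → ℂ) (z : ℂ) : ℂ := ∫ t : ℝ, f t * Complex.exp (-(z * t))

lemma norm_mul_cexp (a z : ℂ) (t : ℝ) :
    ‖a * Complex.exp (-(z * t))‖ = ‖a‖ * Real.exp (-(z.re * t)) := by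
  rw [norm_mul, Complex.norm_exp]; simp

lemma integrable_mul_cexp {f : ℝ → ℂ} {z : ℂ} (hf : AEStronglyMeasurable f)
    (h : Integrable fun t => ‖f t‖ * Real.exp (-(z.re * t))) :
    Integrable fun t : ℝ => f t * Complex.exp (-(z * t)) := by
  refine h.mono' (hf.mul (by fun_prop)) (ae_of_all _ fun t => ?_)
  rw [norm_mul_cexp]

lemma integrable_mul_cexp_of_le {f : ℝ → ℂ} {z : ℂ} {σ C M : ℝ} (hf : AEStronglyMeasurable f)
    (hC : ∀ t, ‖f t‖ ≤ C * Real.exp (σ * t)) (hM : ∀ t, ‖f t‖ ≤ M) (h0 : 0 < z.re)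
    (h1 : z.re < σ) : Integrable fun t : ℝ => f t * Complex.exp (-(z * t)) := by
  have hm : AEStronglyMeasurable fun t : ℝ => f t * Complex.exp (-(z * t)) :=
    hf.mul (by fun_prop)
  rw [← integrableOn_univ, ← Set.Iic_union_Ioi (a := (0 : ℝ)), integrableOn_union]
  constructor
  · refine ((integrableOn_exp_mul_Iic (sub_pos.2 h1) 0).const_mul C).mono' hm.restrict
      (ae_of_all _ fun t => ?_)
    rw [norm_mul_cexp]
    refine (mul_le_mul_of_nonneg_right (hC t) (Real.exp_pos _).le).trans_eq ?_
    rw [mul_assoc, ← Real.exp_add]; ring_nf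
  · refine ((integrableOn_exp_mul_Ioi (neg_lt_zero.2 h0) 0).const_mul M).mono' hm.restrict
      (ae_of_all _ fun t => ?_)
    rw [norm_mul_cexp, neg_mul]
    exact mul_le_mul_of_nonneg_right (hM t) (Real.exp_pos _).le

lemma laplace_shift (f : ℝ → ℂ) (s : ℝ) (z : ℂ) :
    laplace (fun t => f (t - s)) z = Complex.exp (-(z * s)) * laplace f z := by
  unfold laplace
  rw [← integral_const_mul, ← integral_sub_right_eq_self
    (fun t : ℝ => Complex.exp (-(z * s)) * (f t * Complex.exp (-(z * t)))) s]
  congr 1; ext t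
  rw [mul_left_comm, ← Complex.exp_add]; push_cast; ring_nf

lemma laplace_deriv {f f' : ℝ → ℂ} {z : ℂ} (hd : ∀ t, HasDerivAt f (f' t) t)
    (hf : Integrable fun t : ℝ => f t * Complex.exp (-(z * t)))
    (hf' : Integrable fun t : ℝ => f' t * Complex.exp (-(z * t))) :
    laplace f' z = z * laplace f z := by
  have h := integral_eq_zero_of_hasDerivAt_of_integrable
    (f := fun t : ℝ => f t * Complex.exp (-(z * t)))
    (f' := fun t : ℝ => f' t * Complex.exp (-(z * t)) - z * (f t * Complex.exp (-(z * t))))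
    (fun t => ?_) (hf'.sub (hf.const_mul z)) hf
  · rw [integral_sub hf' (hf.const_mul z), integral_const_mul] at h
    exact sub_eq_zero.1 h
  · have he : HasDerivAt (fun t : ℝ => Complex.exp (-(z * t))) (Complex.exp (-(z * t)) * -z) t := by
      refine HasDerivAt.cexp ?_
      simpa using ((hasDerivAt_id' (t : ℝ)).ofReal_comp.const_mul z).fun_neg
    exact ((hd t).mul he).congr_deriv (by ring)

lemma laplace_ofReal (f : ℝ → ℝ) (x : ℝ) :
    laplace (fun t => (f t : ℂ)) x = ((∫ t, f t * Real.exp (-(x * t)) : ℝ) : ℂ) := by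
  unfold laplace
  rw [← integral_complex_ofReal]
  congr 1; ext t; push_cast; rfl

lemma laplace_eq_complexMGF {f : ℝ → ℝ} (hf : Measurable f) (h0 : ∀ t, 0 ≤ f t) (z : ℂ) :
    laplace (fun t => (f t : ℂ)) z = ProbabilityTheory.complexMGF (fun t : ℝ => -t)
      (volume.withDensity fun t => ENNReal.ofReal (f t)) z := by
  rw [ProbabilityTheory.complexMGF, integral_withDensity_eq_integral_toReal_smul
    (by fun_prop) (ae_of_all _ fun t => ENNReal.ofReal_lt_top)]
  unfold laplace
  congr 1; ext t
  rw [ENNReal.toReal_ofReal (h0 t)]; simp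

lemma mem_integrableExpSet_withDensity {f : ℝ → ℝ} (hf : Measurable f) (h0 : ∀ t, 0 ≤ f t) (x : ℝ) :
    x ∈ ProbabilityTheory.integrableExpSet (fun t : ℝ => -t)
      (volume.withDensity fun t => ENNReal.ofReal (f t)) ↔
      Integrable fun t => f t * Real.exp (-(x * t)) := by
  rw [ProbabilityTheory.integrableExpSet, Set.mem_ofPred_eq,
    integrable_withDensity_iff_integrable_smul' (by fun_prop)
      (ae_of_all _ fun t => ENNReal.ofReal_lt_top)]
  refine iff_of_eq ?_
  congr 1; ext t
  rw [ENNReal.toReal_ofReal (h0 t)]; simp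

lemma Ioo_subset_interior_integrableExpSet {f : ℝ → ℝ} (hf : Measurable f) (h0 : ∀ t, 0 ≤ f t)
    {S : Set ℝ} (hS : IsOpen S) (hi : ∀ x ∈ S, Integrable fun t => f t * Real.exp (-(x * t))) :
    S ⊆ interior (ProbabilityTheory.integrableExpSet (fun t : ℝ => -t)
      (volume.withDensity fun t => ENNReal.ofReal (f t))) :=
  interior_maximal (fun x hx => (mem_integrableExpSet_withDensity hf h0 x).2 (hi x hx)) hS

lemma differentiableOn_laplace {f : ℝ → ℝ} (hf : Measurable f) (h0 : ∀ t, 0 ≤ f t)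
    {S : Set ℝ} (hS : IsOpen S) (hi : ∀ x ∈ S, Integrable fun t => f t * Real.exp (-(x * t))) :
    DifferentiableOn ℂ (laplace fun t => (f t : ℂ)) {z | z.re ∈ S} := by
  have := ProbabilityTheory.differentiableOn_complexMGF (X := fun t : ℝ => -t)
    (μ := volume.withDensity fun t => ENNReal.ofReal (f t))
  refine (this.mono fun z hz => Ioo_subset_interior_integrableExpSet hf h0 hS hi hz).congr
    fun z _ => laplace_eq_complexMGF hf h0 z

/-- Landau's theorem for Laplace transforms of nonnegative functions supported on `(-∞, 0]`. -/
lemma integrable_of_differentiableOn_laplace {f : ℝ → ℝ} (hf : Measurable f) (h0 : ∀ t, 0 ≤ f t)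
    (hsupp : ∀ t, 0 < t → f t = 0) {S : Set ℝ} (hS : IsOpen S)
    (hi : ∀ x ∈ S, Integrable fun t => f t * Real.exp (-(x * t))) {x₀ r w : ℝ} (hx₀ : x₀ ∈ S)
    {G : ℂ → ℂ} (hG : DifferentiableOn ℂ G (Metric.ball (x₀ : ℂ) r))
    (hGf : G =ᶠ[nhds (x₀ : ℂ)] laplace fun t => (f t : ℂ)) (hw : 0 ≤ w) (hwr : w < r) :
    Integrable fun t => f t * Real.exp (-((x₀ + w) * t)) := by
  rw [← mem_integrableExpSet_withDensity hf h0]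
  refine mem_integrableExpSet_of_differentiableOn ?_
    (Ioo_subset_interior_integrableExpSet hf h0 hS hi hx₀) hG
    (hGf.trans (Eventually.of_forall fun z => laplace_eq_complexMGF hf h0 z)) hw hwr
  rw [EventuallyLE, ae_withDensity_iff (by fun_prop)]
  refine ae_of_all _ fun t ht => ?_
  by_contra hneg
  simp only [Pi.zero_apply, not_le, Left.neg_neg_iff] at hneg
  exact ht (by simp [hsupp t hneg])

lemma integrable_vertical {F : ℂ → ℂ} {a M : ℝ} {S : Set ℝ} (ha : a ∈ S)
    (hF : DifferentiableOn ℂ F {z | z.re ∈ S})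
    (hM : ∀ z : ℂ, z.re ∈ S → ‖F z‖ ≤ M / (1 + z.im ^ 2)) :
    Integrable fun y : ℝ => F (a + y * Complex.I) := by
  refine (integrable_inv_one_add_sq.const_mul M).mono' ?_ (ae_of_all _ fun y => ?_)
  · refine Continuous.aestronglyMeasurable ?_
    exact hF.continuousOn.comp_continuous (by fun_prop) fun y => by simpa using ha
  · simpa [div_eq_mul_inv] using hM (a + y * Complex.I) (by simpa using ha)

/-- Shifting a vertical line of integration inside a strip of holomorphy. -/
lemma integral_vertical_eq {F : ℂ → ℂ} {a b M : ℝ} (hab : a ≤ b)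
    (hF : DifferentiableOn ℂ F {z | z.re ∈ Set.Icc a b})
    (hM : ∀ z : ℂ, z.re ∈ Set.Icc a b → ‖F z‖ ≤ M / (1 + z.im ^ 2)) :
    ∫ y : ℝ, F (a + y * Complex.I) = ∫ y : ℝ, F (b + y * Complex.I) := by
  have hinv : Tendsto (fun T : ℝ => M / (1 + T ^ 2) * |b - a|) atTop (nhds 0) := by
    have h : Tendsto (fun T : ℝ => 1 + T ^ 2) atTop atTop :=
      tendsto_atTop_add_const_left _ _ (tendsto_pow_atTop two_ne_zero)
    simpa using (h.const_div_atTop M).mul_const |b - a|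
  have hhor (s : ℝ) (hs : s ^ 2 = 1) :
      Tendsto (fun T : ℝ => ∫ x : ℝ in a..b, F (x + (s * T : ℝ) * Complex.I)) atTop (nhds 0) := by
    refine squeeze_zero_norm (fun T => ?_) hinv
    refine intervalIntegral.norm_integral_le_of_norm_le_const fun x hx => ?_
    rw [Set.uIoc_of_le hab] at hx
    have := hM (x + (s * T : ℝ) * Complex.I) (by simpa using ⟨hx.1.le, hx.2⟩)
    simpa [mul_pow, hs] using this
  have hver (s : ℝ) (hs : s ∈ Set.Icc a b) :
      Tendsto (fun T : ℝ => ∫ y : ℝ in (-T)..T, F (s + y * Complex.I)) atTop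
        (nhds (∫ y : ℝ, F (s + y * Complex.I))) :=
    intervalIntegral_tendsto_integral (integrable_vertical hs hF hM) tendsto_neg_atTop_atBot
      tendsto_id
  have hrect (T : ℝ) : (∫ x : ℝ in a..b, F (x + ((-1) * T : ℝ) * Complex.I))
      - (∫ x : ℝ in a..b, F (x + (1 * T : ℝ) * Complex.I))
      + Complex.I • (∫ y : ℝ in (-T)..T, F (b + y * Complex.I))
      - Complex.I • (∫ y : ℝ in (-T)..T, F (a + y * Complex.I)) = 0 := by
    have := Complex.integral_boundary_rect_eq_zero_of_differentiableOn F
      (a + (-T : ℝ) * Complex.I) (b + (T : ℝ) * Complex.I) (hF.mono fun z hz => ?_)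
    · simpa using this
    · have := hz.1
      simpa [Set.uIcc_of_le hab] using this
  have hlim := (((hhor (-1) (by norm_num)).sub (hhor 1 (by norm_num))).add
    ((hver b ⟨hab, le_rfl⟩).const_smul Complex.I)).sub
    ((hver a ⟨le_rfl, hab⟩).const_smul Complex.I)
  have h0 := tendsto_nhds_unique (tendsto_const_nhds.congr fun T => (hrect T).symm) hlim
  simp only [sub_zero, zero_add, smul_eq_mul, ← mul_sub] at h0
  exact (sub_eq_zero.1 ((mul_eq_zero.1 h0.symm).resolve_left Complex.I_ne_zero)).symm

open scoped FourierTransform in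
/-- If the Laplace transform of `f` on the line `re z = a` extends holomorphically, with quadratic
decay, to the strip `a ≤ re z ≤ b`, then `f` is dominated by a multiple of `exp (b t)`. -/
lemma exists_bound_of_laplace {f : ℝ → ℂ} (hf : Continuous f) {F : ℂ → ℂ} {a b M : ℝ} (hab : a ≤ b)
    (hfint : Integrable fun t : ℝ => f t * Complex.exp (-(a * t)))
    (hlap : ∀ y : ℝ, laplace f (a + y * Complex.I) = F (a + y * Complex.I))
    (hF : DifferentiableOn ℂ F {z | z.re ∈ Set.Icc a b})
    (hM : ∀ z : ℂ, z.re ∈ Set.Icc a b → ‖F z‖ ≤ M / (1 + z.im ^ 2)) :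
    ∃ C, ∀ t, ‖f t‖ ≤ C * Real.exp (b * t) := by
  set g : ℝ → ℂ := fun t => f t * Complex.exp (-(a * t))
  have hfou (w : ℝ) : 𝓕 g w = F (a + (2 * Real.pi * w : ℝ) * Complex.I) := by
    rw [Real.fourier_eq', ← hlap, laplace]
    congr 1; ext t
    simp only [g, smul_eq_mul, RCLike.inner_apply, conj_trivial]
    rw [mul_left_comm, ← Complex.exp_add]
    congr 2; push_cast; ring
  have hiF := integrable_vertical (Set.left_mem_Icc.2 hab) hF hM
  have h2π : (2 * Real.pi) ≠ 0 := by positivity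
  have hiFou : Integrable (𝓕 g) := by
    have := hiF.comp_mul_left' h2π
    exact this.congr (ae_of_all _ fun w => (hfou w).symm)
  have hinv (t : ℝ) : (2 * Real.pi : ℂ) * f t =
      ∫ y : ℝ, F (a + y * Complex.I) * Complex.exp ((a + y * Complex.I) * t) := by
    have h1 : 𝓕⁻ (𝓕 g) t = g t :=
      hfint.fourierInv_fourier_eq hiFou (by fun_prop)
    have h2 : f t = g t * Complex.exp (a * t) := by
      simp only [g]; rw [mul_assoc, ← Complex.exp_add, neg_add_cancel, Complex.exp_zero, mul_one]
    rw [h2, ← h1, Real.fourierInv_eq']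
    have h3 := Measure.integral_comp_mul_left
      (fun y : ℝ => F (a + y * Complex.I) * Complex.exp ((a + y * Complex.I) * t)) (2 * Real.pi)
    have h4 : (∫ y : ℝ, F (a + y * Complex.I) * Complex.exp ((a + y * Complex.I) * t)) =
        (2 * Real.pi : ℂ) * ∫ x : ℝ, F (a + (2 * Real.pi * x : ℝ) * Complex.I) *
          Complex.exp ((a + (2 * Real.pi * x : ℝ) * Complex.I) * t) := by
      rw [h3, abs_of_pos (by positivity), Complex.real_smul, ← mul_assoc]
      push_cast
      rw [mul_inv_cancel₀ (by simp), one_mul]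
    rw [h4, ← integral_mul_const]
    congr 2; ext w
    rw [hfou, smul_eq_mul, mul_comm (Complex.exp _), mul_assoc, ← Complex.exp_add]
    congr 2
    simp only [RCLike.inner_apply, conj_trivial]
    push_cast; ring
  refine ⟨(2 * Real.pi)⁻¹ * ∫ y : ℝ, M * (1 + y ^ 2)⁻¹, fun t => ?_⟩
  have hM0 : 0 ≤ M := by
    have := (norm_nonneg _).trans (hM a (by simpa using hab))
    simpa using this
  have hshift : ∫ y : ℝ, F (a + y * Complex.I) * Complex.exp ((a + y * Complex.I) * t) =
      ∫ y : ℝ, F (b + y * Complex.I) * Complex.exp ((b + y * Complex.I) * t) := by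
    refine integral_vertical_eq (F := fun z => F z * Complex.exp (z * t))
      (M := M * Real.exp ((|a| + |b|) * |t|)) hab
      (hF.mul (by fun_prop)) fun z hz => ?_
    rw [norm_mul, Complex.norm_exp, mul_div_right_comm]
    refine mul_le_mul (hM z hz) (Real.exp_le_exp.2 ?_) (Real.exp_pos _).le (by positivity)
    have h1 : |z.re| ≤ |a| + |b| := by
      rw [abs_le]
      constructor
      · linarith [hz.1, neg_abs_le a, abs_nonneg b]
      · linarith [hz.2, le_abs_self b, abs_nonneg a]
    have h2 : z.re * t ≤ (|a| + |b|) * |t| :=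
      (le_abs_self _).trans ((abs_mul _ _).le.trans
        (mul_le_mul_of_nonneg_right h1 (abs_nonneg t)))
    simpa using h2
  have hnorm : 2 * Real.pi * ‖f t‖ ≤ (∫ y : ℝ, M * (1 + y ^ 2)⁻¹) * Real.exp (b * t) := by
    have h1 : ‖(2 * Real.pi : ℂ) * f t‖ = 2 * Real.pi * ‖f t‖ := by
      rw [norm_mul]; simp [abs_of_pos Real.pi_pos]
    rw [← h1, hinv, hshift, ← integral_mul_const]
    refine norm_integral_le_of_norm_le
      ((integrable_inv_one_add_sq.const_mul M).mul_const _) (ae_of_all _ fun y => ?_)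
    rw [norm_mul, Complex.norm_exp]
    have := hM (b + y * Complex.I) (by simpa using hab)
    simp only [Complex.add_im, Complex.ofReal_im, Complex.mul_im, Complex.ofReal_re, Complex.I_im,
      Complex.I_re, mul_zero, mul_one, add_zero, zero_add] at this
    simp only [Complex.mul_re, Complex.add_re, Complex.ofReal_re, Complex.ofReal_im, Complex.I_im,
      Complex.I_re, mul_zero, mul_one, sub_zero, add_zero]
    rw [← div_eq_mul_inv]
    exact mul_le_mul_of_nonneg_right this (Real.exp_pos _).le
  rw [mul_assoc, inv_mul_eq_div, le_div_iff₀ (by positivity), mul_comm]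
  exact hnorm

/-- The characteristic function on the complex plane. -/
noncomputable def chiC (b c τ : ℝ) (z : ℂ) : ℂ :=
  z ^ 2 - c * z + 1 / (1 - b * Complex.exp (-(z * c * τ)))

lemma chiC_ofReal (b c τ x : ℝ) : chiC b c τ x = (chi0 b c τ x : ℂ) := by
  unfold chiC chi0; push_cast; rfl

namespace IsProfile

variable {b c τ : ℝ} {φ : ℝ → ℝ}

/-- The nonlinear part of the reaction term. -/
noncomputable def nonlin (b c τ : ℝ) (φ : ℝ → ℝ) (t : ℝ) : ℝ :=
  Bop b c τ φ t * ((1 - b) * SBop b c τ φ t)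

lemma norm_delay (P : IsProfile b c τ φ) (z : ℂ) :
    ‖(b : ℂ) * Complex.exp (-(z * c * τ))‖ = b * Real.exp (-(z.re * c * τ)) := by
  rw [norm_mul, Complex.norm_exp, Complex.norm_real, Real.norm_of_nonneg P.b_mem.1.le]; simp

lemma delay_lt (P : IsProfile b c τ φ) {x : ℝ} (hx : 0 ≤ x) :
    b * Real.exp (-(x * c * τ)) ≤ b := by
  have := P.c_pos; have := P.τ_pos
  exact mul_le_of_le_one_right P.b_mem.1.le (Real.exp_le_one_iff.2 (by
    have : 0 ≤ x * c * τ := by positivity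
    linarith))

lemma le_norm_one_sub_delay (P : IsProfile b c τ φ) (z : ℂ) :
    1 - b * Real.exp (-(z.re * c * τ)) ≤ ‖1 - (b : ℂ) * Complex.exp (-(z * c * τ))‖ := by
  rw [← P.norm_delay]
  simpa using norm_sub_norm_le (1 : ℂ) ((b : ℂ) * Complex.exp (-(z * c * τ)))

lemma one_sub_delay_pos (P : IsProfile b c τ φ) {x : ℝ} (hx : 0 ≤ x) :
    0 < 1 - b * Real.exp (-(x * c * τ)) := by
  linarith [P.delay_lt hx, P.b_mem.2]

lemma one_sub_delay_ne (P : IsProfile b c τ φ) {z : ℂ} (hz : 0 ≤ z.re) :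
    1 - (b : ℂ) * Complex.exp (-(z * c * τ)) ≠ 0 :=
  norm_pos_iff.1 ((P.one_sub_delay_pos hz).trans_le (P.le_norm_one_sub_delay z))

lemma norm_symbol_le (P : IsProfile b c τ φ) {z : ℂ} (hz : 0 ≤ z.re) :
    ‖1 / (1 - (b : ℂ) * Complex.exp (-(z * c * τ)))‖
      ≤ 1 / (1 - b * Real.exp (-(z.re * c * τ))) := by
  rw [norm_div, norm_one]
  exact one_div_le_one_div_of_le (P.one_sub_delay_pos hz) (P.le_norm_one_sub_delay z)

lemma symbol_le (P : IsProfile b c τ φ) {x : ℝ} (hx : 0 ≤ x) :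
    1 / (1 - b * Real.exp (-(x * c * τ))) ≤ 1 / (1 - b) :=
  one_div_le_one_div_of_le P.one_sub_pos (by linarith [P.delay_lt hx])

lemma differentiableAt_chiC (P : IsProfile b c τ φ) {z : ℂ} (hz : 0 ≤ z.re) :
    DifferentiableAt ℂ (chiC b c τ) z := by
  unfold chiC
  have := P.one_sub_delay_ne hz
  fun_prop (disch := assumption)

lemma Bop_succ (P : IsProfile b c τ φ) (t : ℝ) :
    Bop b c τ φ t = φ t + b * Bop b c τ φ (t - c * τ) := by
  rw [Bop, (P.summable_Bop t).tsum_eq_zero_add, Bop, ← tsum_mul_left]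
  congr 1
  · simp
  · congr 1; ext j
    rw [pow_succ', mul_assoc]; congr 3; push_cast; ring

lemma nonlin_nonneg (P : IsProfile b c τ φ) (t : ℝ) : 0 ≤ nonlin b c τ φ t :=
  mul_nonneg (P.Bop_nonneg t) (mul_nonneg P.one_sub_pos.le (P.SBop_nonneg t))

lemma nonlin_pos (P : IsProfile b c τ φ) (t : ℝ) : 0 < nonlin b c τ φ t := by
  refine mul_pos ((P.pos t).trans_le (P.self_le_Bop t)) (mul_pos P.one_sub_pos ?_)
  rw [SBop_eq]
  exact (P.pos _).trans_le (P.self_le_Bop _)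

lemma nonlin_le (P : IsProfile b c τ φ) (t : ℝ) : nonlin b c τ φ t ≤ 1 / (1 - b) :=
  (mul_le_of_le_one_right (P.Bop_nonneg t) (P.SBop_le t)).trans (P.Bop_le (P.le_one t))

lemma continuous_nonlin (P : IsProfile b c τ φ) : Continuous (nonlin b c τ φ) := by
  have h := P.continuous_Bop
  have : SBop b c τ φ = fun t => Bop b c τ φ (t - c * τ) := funext SBop_eq
  unfold nonlin
  rw [this]
  fun_prop

lemma exists_nonlin_le (P : IsProfile b c τ φ) {σ : ℝ} (hσ : σ ∈ rates φ) :
    ∃ C, ∀ t, nonlin b c τ φ t ≤ C * Real.exp (2 * σ * t) := by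
  obtain ⟨h0, C, hC⟩ := hσ
  have hC0 : 0 ≤ C := by simpa using (P.nonneg 0).trans (hC 0)
  refine ⟨(C / (1 - b)) * ((1 - b) * (C / (1 - b))), fun t => ?_⟩
  have hb := P.one_sub_pos
  have h1 : Bop b c τ φ t ≤ C / (1 - b) * Real.exp (σ * t) :=
    (P.Bop_le (hC t)).trans_eq (by ring)
  have h2 : SBop b c τ φ t ≤ C / (1 - b) * Real.exp (σ * t) := by
    rw [SBop_eq]
    refine (P.Bop_le ((P.mono ?_).trans (hC t))).trans_eq (by ring)
    have := mul_pos P.c_pos P.τ_pos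
    linarith
  calc nonlin b c τ φ t
      ≤ (C / (1 - b) * Real.exp (σ * t)) * ((1 - b) * (C / (1 - b) * Real.exp (σ * t))) := by
        have := P.SBop_nonneg t
        unfold nonlin
        gcongr
    _ = _ := by rw [show 2 * σ * t = σ * t + σ * t by ring, Real.exp_add]; ring

lemma integrable_nonlin (P : IsProfile b c τ φ) {σ : ℝ} (hσ : σ ∈ rates φ) {z : ℂ}
    (h0 : 0 < z.re) (h1 : z.re < 2 * σ) :
    Integrable fun t : ℝ => (nonlin b c τ φ t : ℂ) * Complex.exp (-(z * t)) := by
  obtain ⟨C, hC⟩ := P.exists_nonlin_le hσ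
  refine integrable_mul_cexp_of_le
    (Complex.continuous_ofReal.comp P.continuous_nonlin).aestronglyMeasurable
    (C := C) (M := 1 / (1 - b)) (fun t => ?_) (fun t => ?_) h0 h1
  · simpa [abs_of_nonneg (P.nonlin_nonneg t)] using hC t
  · simpa [abs_of_nonneg (P.nonlin_nonneg t)] using P.nonlin_le t

lemma integrable_profile (P : IsProfile b c τ φ) {σ : ℝ} (hσ : σ ∈ rates φ) {z : ℂ}
    (h0 : 0 < z.re) (h1 : z.re < σ) :
    Integrable fun t : ℝ => (φ t : ℂ) * Complex.exp (-(z * t)) := by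
  obtain ⟨-, C, hC⟩ := hσ
  refine integrable_mul_cexp_of_le
    (Complex.continuous_ofReal.comp P.smooth.continuous).aestronglyMeasurable
    (C := C) (M := 1) (fun t => ?_) (fun t => ?_) h0 h1
  · simpa [abs_of_nonneg (P.nonneg t)] using hC t
  · simpa [abs_of_nonneg (P.nonneg t)] using P.le_one t

lemma integrable_deriv (P : IsProfile b c τ φ) {σ : ℝ} (hσ : σ ∈ rates φ) {z : ℂ}
    (h0 : 0 < z.re) (h1 : z.re < σ) :
    Integrable fun t : ℝ => ((deriv φ t : ℝ) : ℂ) * Complex.exp (-(z * t)) := by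
  obtain ⟨-, C, hC⟩ := hσ
  refine integrable_mul_cexp_of_le
    (Complex.continuous_ofReal.comp (P.smooth.continuous_deriv (by norm_num))).aestronglyMeasurable
    (C := c * C) (M := c) (fun t => ?_) (fun t => ?_) h0 h1
  · rw [Complex.norm_real, Real.norm_of_nonneg (P.deriv_nonneg t), mul_assoc]
    exact (P.deriv_le t).trans (mul_le_mul_of_nonneg_left (hC t) P.c_pos.le)
  · rw [Complex.norm_real, Real.norm_of_nonneg (P.deriv_nonneg t)]
    exact (P.deriv_le t).trans (mul_le_of_le_one_right P.c_pos.le (P.le_one t))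

lemma integrable_Bop (P : IsProfile b c τ φ) {σ : ℝ} (hσ : σ ∈ rates φ) {z : ℂ}
    (h0 : 0 < z.re) (h1 : z.re < σ) :
    Integrable fun t : ℝ => (Bop b c τ φ t : ℂ) * Complex.exp (-(z * t)) := by
  obtain ⟨-, C, hC⟩ := hσ
  refine integrable_mul_cexp_of_le
    (Complex.continuous_ofReal.comp P.continuous_Bop).aestronglyMeasurable
    (C := C / (1 - b)) (M := 1 / (1 - b)) (fun t => ?_) (fun t => ?_) h0 h1
  · rw [Complex.norm_real, Real.norm_of_nonneg (P.Bop_nonneg t)]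
    exact (P.Bop_le (hC t)).trans_eq (by ring)
  · rw [Complex.norm_real, Real.norm_of_nonneg (P.Bop_nonneg t)]
    exact P.Bop_le (P.le_one t)

lemma laplace_Bop (P : IsProfile b c τ φ) {σ : ℝ} (hσ : σ ∈ rates φ) {z : ℂ}
    (h0 : 0 < z.re) (h1 : z.re < σ) :
    laplace (fun t => (Bop b c τ φ t : ℂ)) z =
      1 / (1 - (b : ℂ) * Complex.exp (-(z * c * τ))) * laplace (fun t => (φ t : ℂ)) z := by
  have h : laplace (fun t => (φ t : ℂ)) z =
      laplace (fun t => (Bop b c τ φ t : ℂ)) z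
        - b * laplace (fun t => (Bop b c τ φ (t - c * τ) : ℂ)) z := by
    have hs : Integrable fun t : ℝ =>
        (Bop b c τ φ (t - c * τ) : ℂ) * Complex.exp (-(z * t)) := by
      refine (((P.integrable_Bop hσ h0 h1).comp_sub_right (c * τ)).const_mul
        (Complex.exp (-(z * c * τ)))).congr (ae_of_all _ fun t => ?_)
      simp only
      rw [mul_left_comm, ← Complex.exp_add]
      congr 2; push_cast; ring
    unfold laplace
    rw [← integral_const_mul, ← integral_sub (P.integrable_Bop hσ h0 h1) (hs.const_mul _)]
    congr 1; ext t
    rw [P.Bop_succ t]; push_cast; ring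
  rw [laplace_shift (fun t => (Bop b c τ φ t : ℂ))] at h
  have hne := P.one_sub_delay_ne h0.le
  rw [one_div, inv_mul_eq_div, eq_div_iff hne, h]
  push_cast
  rw [← mul_assoc z]
  ring

/-- The Laplace transform of the profile equation. -/
lemma chiC_mul_laplace (P : IsProfile b c τ φ) {σ : ℝ} (hσ : σ ∈ rates φ) {z : ℂ}
    (h0 : 0 < z.re) (h1 : z.re < σ) :
    chiC b c τ z * laplace (fun t => (φ t : ℂ)) z =
      laplace (fun t => (nonlin b c τ φ t : ℂ)) z := by
  have i0 := P.integrable_profile hσ h0 h1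
  have i1 := P.integrable_deriv hσ h0 h1
  have iB := P.integrable_Bop hσ h0 h1
  have iN := P.integrable_nonlin hσ h0 (by linarith)
  have heq (t : ℝ) : ((deriv (deriv φ) t : ℝ) : ℂ) * Complex.exp (-(z * t)) =
      c * (((deriv φ t : ℝ) : ℂ) * Complex.exp (-(z * t)))
        - (Bop b c τ φ t : ℂ) * Complex.exp (-(z * t))
        + (nonlin b c τ φ t : ℂ) * Complex.exp (-(z * t)) := by
    have : deriv (deriv φ) t = c * deriv φ t - Bop b c τ φ t + nonlin b c τ φ t := by
      unfold nonlin; linarith [P.eqn t]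
    rw [this]; push_cast; ring
  have i2 : Integrable fun t : ℝ => ((deriv (deriv φ) t : ℝ) : ℂ) * Complex.exp (-(z * t)) := by
    simp_rw [heq]
    exact ((i1.const_mul _).sub iB).add iN
  have l1 : laplace (fun t => ((deriv φ t : ℝ) : ℂ)) z = z * laplace (fun t => (φ t : ℂ)) z :=
    laplace_deriv (fun t => (P.hasDerivAt t).ofReal_comp) i0 i1
  have l2 : laplace (fun t => ((deriv (deriv φ) t : ℝ) : ℂ)) z =
      z * laplace (fun t => ((deriv φ t : ℝ) : ℂ)) z :=
    laplace_deriv (fun t => (P.hasDerivAt_deriv t).ofReal_comp) i1 i2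
  have l3 : laplace (fun t => ((deriv (deriv φ) t : ℝ) : ℂ)) z =
      c * laplace (fun t => ((deriv φ t : ℝ) : ℂ)) z - laplace (fun t => (Bop b c τ φ t : ℂ)) z
        + laplace (fun t => (nonlin b c τ φ t : ℂ)) z := by
    unfold laplace
    simp_rw [heq]
    refine (integral_add ((i1.const_mul (c : ℂ)).sub iB) iN).trans ?_
    refine congrArg (· + _) ((integral_sub (i1.const_mul (c : ℂ)) iB).trans ?_)
    rw [integral_const_mul]
  rw [l2, l1, P.laplace_Bop hσ h0 h1] at l3
  unfold chiC
  linear_combination l3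

lemma integral_nonlin_pos (P : IsProfile b c τ φ) {σ x : ℝ} (hσ : σ ∈ rates φ)
    (h0 : 0 < x) (h1 : x < 2 * σ) : 0 < ∫ t, nonlin b c τ φ t * Real.exp (-(x * t)) := by
  have hi : Integrable fun t => nonlin b c τ φ t * Real.exp (-(x * t)) := by
    have := (P.integrable_nonlin hσ (z := x) (by simpa) (by simpa)).re
    refine this.congr (ae_of_all _ fun t => ?_)
    simp only [RCLike.re_eq_complex_re]
    norm_cast
  have hpos (t : ℝ) : 0 < nonlin b c τ φ t * Real.exp (-(x * t)) :=
    mul_pos (P.nonlin_pos t) (Real.exp_pos _)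
  rw [integral_pos_iff_support_of_nonneg (fun t => (hpos t).le) hi]
  have : Function.support (fun t => nonlin b c τ φ t * Real.exp (-(x * t))) = Set.univ :=
    Set.eq_univ_of_forall fun t => (hpos t).ne'
  simp [this]

lemma chi0_pos_of_mem_rates (P : IsProfile b c τ φ) {σ x : ℝ} (hσ : σ ∈ rates φ)
    (h0 : 0 < x) (h1 : x < σ) : 0 < chi0 b c τ x := by
  have h := P.chiC_mul_laplace hσ (z := x) (by simpa) (by simpa)
  rw [chiC_ofReal, laplace_ofReal, laplace_ofReal] at h
  norm_cast at h
  have hN := P.integral_nonlin_pos hσ h0 (by linarith)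
  rw [← h] at hN
  exact pos_of_mul_pos_left hN
    (integral_nonneg fun t => mul_nonneg (P.nonneg t) (Real.exp_pos _).le)

end IsProfile

namespace IsProfile

variable {b c τ : ℝ} {φ : ℝ → ℝ}

/-- The optimal exponential decay rate of the profile at `-∞`. -/
noncomputable def rate (φ : ℝ → ℝ) : ℝ := sSup (rates φ)

lemma bddAbove_rates (P : IsProfile b c τ φ) : BddAbove (rates φ) := ⟨c, fun _ h => P.rates_le h⟩

lemma le_rate (P : IsProfile b c τ φ) {σ : ℝ} (hσ : σ ∈ rates φ) : σ ≤ rate φ :=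
  le_csSup P.bddAbove_rates hσ

lemma rate_pos (P : IsProfile b c τ φ) : 0 < rate φ := by
  obtain ⟨σ, hσ⟩ := P.rates_nonempty
  exact hσ.1.trans_le (P.le_rate hσ)

lemma exists_rates_gt (P : IsProfile b c τ φ) {x : ℝ} (hx : x < rate φ) :
    ∃ σ ∈ rates φ, x < σ := exists_lt_of_lt_csSup P.rates_nonempty hx

lemma chi0_pos (P : IsProfile b c τ φ) {x : ℝ} (h0 : 0 < x) (h1 : x < rate φ) :
    0 < chi0 b c τ x := by
  obtain ⟨σ, hσ, h⟩ := P.exists_rates_gt h1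
  exact P.chi0_pos_of_mem_rates hσ h0 h

lemma integrable_of_lt_rate (P : IsProfile b c τ φ) {z : ℂ} (h0 : 0 < z.re) (h1 : z.re < rate φ) :
    Integrable fun t : ℝ => (φ t : ℂ) * Complex.exp (-(z * t)) := by
  obtain ⟨σ, hσ, h⟩ := P.exists_rates_gt h1
  exact P.integrable_profile hσ h0 h

lemma chiC_mul_laplace_of_lt_rate (P : IsProfile b c τ φ) {z : ℂ} (h0 : 0 < z.re)
    (h1 : z.re < rate φ) :
    chiC b c τ z * laplace (fun t => (φ t : ℂ)) z =
      laplace (fun t => (nonlin b c τ φ t : ℂ)) z := by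
  obtain ⟨σ, hσ, h⟩ := P.exists_rates_gt h1
  exact P.chiC_mul_laplace hσ h0 h

lemma exists_rates_half_lt (P : IsProfile b c τ φ) {x : ℝ} (hx : x < 2 * rate φ) :
    ∃ σ ∈ rates φ, x < 2 * σ := by
  obtain ⟨σ, hσ, h⟩ := P.exists_rates_gt (show x / 2 < rate φ by linarith)
  exact ⟨σ, hσ, by linarith⟩

lemma integrable_re_of_integrable {f : ℝ → ℝ} {x : ℝ}
    (h : Integrable fun t : ℝ => (f t : ℂ) * Complex.exp (-((x : ℂ) * t))) :
    Integrable fun t => f t * Real.exp (-(x * t)) := by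
  refine h.re.congr (ae_of_all _ fun t => ?_)
  simp only [RCLike.re_eq_complex_re]
  norm_cast

lemma integrable_nonlin_real (P : IsProfile b c τ φ) {x : ℝ} (h0 : 0 < x) (h1 : x < 2 * rate φ) :
    Integrable fun t => nonlin b c τ φ t * Real.exp (-(x * t)) := by
  obtain ⟨σ, hσ, h⟩ := P.exists_rates_half_lt h1
  exact integrable_re_of_integrable (P.integrable_nonlin hσ (z := x) (by simpa) (by simpa))

lemma differentiableOn_laplace_nonlin (P : IsProfile b c τ φ) :
    DifferentiableOn ℂ (laplace fun t => (nonlin b c τ φ t : ℂ))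
      {z | z.re ∈ Set.Ioo 0 (2 * rate φ)} :=
  differentiableOn_laplace P.continuous_nonlin.measurable P.nonlin_nonneg isOpen_Ioo
    fun _ hx => P.integrable_nonlin_real hx.1 hx.2

lemma mem_rates_of_integrable (P : IsProfile b c τ φ) {x : ℝ} (hx : 0 < x)
    (h : Integrable fun t => (Set.Iic 0).indicator φ t * Real.exp (-(x * t))) : x ∈ rates φ := by
  have hnn (s : ℝ) : 0 ≤ (Set.Iic 0).indicator φ s * Real.exp (-(x * s)) :=
    mul_nonneg (Set.indicator_nonneg (fun s _ => P.nonneg s) s) (Real.exp_pos _).le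
  set J := ∫ s, (Set.Iic 0).indicator φ s * Real.exp (-(x * s))
  refine P.mem_rates_of_le (T := -1) (C := J * Real.exp x) hx fun t ht => ?_
  have h1 : φ t * Real.exp (-(x * (t + 1))) * volume.real (Set.Icc t (t + 1)) ≤
      ∫ s in Set.Icc t (t + 1), (Set.Iic 0).indicator φ s * Real.exp (-(x * s)) := by
    refine setIntegral_ge_of_const_le_real measurableSet_Icc (by simp) (fun s hs => ?_)
      h.integrableOn
    rw [Set.indicator_of_mem (Set.mem_Iic.2 (by linarith [hs.2]))]
    exact mul_le_mul (P.mono hs.1) (Real.exp_le_exp.2 (by nlinarith [hs.2])) (Real.exp_pos _).le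
      (P.nonneg s)
  have h2 : φ t * Real.exp (-(x * (t + 1))) ≤ J := by
    have := h1.trans (setIntegral_le_integral h (ae_of_all _ hnn))
    simpa using this
  calc φ t = φ t * Real.exp (-(x * (t + 1))) * (Real.exp x * Real.exp (x * t)) := by
        rw [mul_assoc, ← Real.exp_add, ← Real.exp_add,
          show -(x * (t + 1)) + (x + x * t) = 0 by ring, Real.exp_zero, mul_one]
    _ ≤ J * (Real.exp x * Real.exp (x * t)) := by gcongr
    _ = _ := by ring

lemma integrable_indicator_Ioi (P : IsProfile b c τ φ) {x : ℝ} (hx : 0 < x) :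
    Integrable fun t => (Set.Ioi 0).indicator φ t * Real.exp (-(x * t)) := by
  have h : IntegrableOn (fun t => φ t * Real.exp (-(x * t))) (Set.Ioi 0) := by
    have hc := P.smooth.continuous
    refine (exp_neg_integrableOn_Ioi 0 hx).mono' (by fun_prop) (ae_of_all _ fun t => ?_)
    rw [Real.norm_of_nonneg (mul_nonneg (P.nonneg t) (Real.exp_pos _).le), neg_mul]
    exact mul_le_of_le_one_left (Real.exp_pos _).le (P.le_one t)
  rw [← integrable_indicator_iff measurableSet_Ioi] at h
  refine h.congr (ae_of_all _ fun t => ?_)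
  simp only [Set.indicator_apply]
  split_ifs <;> simp

lemma integrable_indicator_Iic (P : IsProfile b c τ φ) {x : ℝ} (h0 : 0 < x) (h1 : x < rate φ) :
    Integrable fun t => (Set.Iic 0).indicator φ t * Real.exp (-(x * t)) := by
  have h := (integrable_re_of_integrable (P.integrable_of_lt_rate (z := x) (by simpa)
    (by simpa))).indicator (measurableSet_Iic (a := (0 : ℝ)))
  refine h.congr (ae_of_all _ fun t => ?_)
  simp only [Set.indicator_apply]
  split_ifs <;> simp

lemma integrable_ofReal {f : ℝ → ℝ} (hf : Measurable f) {z : ℂ}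
    (h : Integrable fun t => f t * Real.exp (-(z.re * t))) :
    Integrable fun t : ℝ => (f t : ℂ) * Complex.exp (-(z * t)) := by
  refine integrable_mul_cexp (by fun_prop) (h.norm.congr (ae_of_all _ fun t => ?_))
  simp

lemma chi0_rate (P : IsProfile b c τ φ) : chi0 b c τ (rate φ) = 0 := by
  by_contra hne
  have hl := P.rate_pos
  have hm := P.smooth.continuous.measurable
  have hmm : Measurable ((Set.Iic 0).indicator φ) := hm.indicator measurableSet_Iic
  have hmp : Measurable ((Set.Ioi 0).indicator φ) := hm.indicator measurableSet_Ioi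
  have hneC : chiC b c τ (rate φ : ℂ) ≠ 0 := by
    rw [chiC_ofReal]; exact_mod_cast hne
  obtain ⟨r, hr, hball⟩ := Metric.eventually_nhds_iff_ball.1
    ((P.differentiableAt_chiC (by simpa using hl.le)).continuousAt.eventually_ne hneC)
  set δ := min r (rate φ) / 4 with hδ
  have hδ0 : 0 < δ := by positivity
  have hδr : 4 * δ ≤ r := by linarith [min_le_left r (rate φ)]
  have hδl : 4 * δ ≤ rate φ := by linarith [min_le_right r (rate φ)]
  have hmem : rate φ + δ ∈ rates φ := by
    refine P.mem_rates_of_integrable (by linarith) ?_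
    have := integrable_of_differentiableOn_laplace hmm
      (Set.indicator_nonneg fun s _ => P.nonneg s) (fun t ht => by simp [ht])
      (S := Set.Ioo 0 (rate φ)) isOpen_Ioo (fun x hx => P.integrable_indicator_Iic hx.1 hx.2)
      (x₀ := rate φ - δ) (r := 3 * δ) (w := 2 * δ)
      (G := fun z => laplace (fun t => (nonlin b c τ φ t : ℂ)) z / chiC b c τ z
        - laplace (fun t => (((Set.Ioi 0).indicator φ t : ℝ) : ℂ)) z)
      ⟨by linarith, by linarith⟩ ?_ ?_ (by linarith) (by linarith)
    · simpa only [show rate φ - δ + 2 * δ = rate φ + δ by ring] using this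
    · have hre {z : ℂ} (hz : z ∈ Metric.ball ((rate φ - δ : ℝ) : ℂ) (3 * δ)) :
          |z.re - (rate φ - δ)| < 3 * δ := by
        have h1 := Complex.abs_re_le_norm (z - ((rate φ - δ : ℝ) : ℂ))
        rw [Metric.mem_ball, dist_eq_norm] at hz
        simp only [Complex.sub_re, Complex.ofReal_re] at h1
        exact h1.trans_lt hz
      refine DifferentiableOn.sub (DifferentiableOn.div ?_ ?_ ?_) ?_
      · refine P.differentiableOn_laplace_nonlin.mono fun z hz => ?_
        have := abs_lt.1 (hre hz)
        exact ⟨by linarith, by linarith⟩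
      · intro z hz
        have := abs_lt.1 (hre hz)
        exact (P.differentiableAt_chiC (by linarith)).differentiableWithinAt
      · intro z hz
        refine hball z ?_
        refine Metric.ball_subset_ball hδr ?_
        refine Metric.ball_subset_ball' ?_ hz
        rw [dist_eq_norm, ← Complex.ofReal_sub, Complex.norm_real]
        simp only [sub_sub_cancel_left, norm_neg, Real.norm_of_nonneg hδ0.le]
        linarith
      · refine (differentiableOn_laplace hmp (Set.indicator_nonneg fun s _ => P.nonneg s)
          isOpen_Ioi fun x hx => P.integrable_indicator_Ioi hx).mono fun z hz => ?_
        have := abs_lt.1 (hre hz)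
        exact Set.mem_Ioi.2 (show 0 < z.re by linarith)
    · have hopen : IsOpen {z : ℂ | z.re ∈ Set.Ioo (rate φ - 2 * δ) (rate φ)} :=
        isOpen_Ioo.preimage Complex.continuous_re
      have hnear : ∀ᶠ z in nhds ((rate φ - δ : ℝ) : ℂ), chiC b c τ z ≠ 0 := by
        refine Filter.mem_of_superset (Metric.isOpen_ball.mem_nhds ?_) fun z => hball z
        rw [Metric.mem_ball, dist_eq_norm, ← Complex.ofReal_sub, Complex.norm_real]
        simp only [sub_sub_cancel_left, norm_neg, Real.norm_of_nonneg hδ0.le]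
        linarith
      filter_upwards [hnear,
        hopen.mem_nhds (show _ ∧ _ from ⟨by simp; linarith, by simp; linarith⟩)]
        with z hz hzre
      have h0 : 0 < z.re := by linarith [hzre.1]
      rw [← P.chiC_mul_laplace_of_lt_rate h0 hzre.2, mul_div_cancel_left₀ _ hz, sub_eq_iff_eq_add]
      unfold laplace
      rw [← integral_add (integrable_ofReal hmm (P.integrable_indicator_Iic h0 hzre.2))
        (integrable_ofReal hmp (P.integrable_indicator_Ioi h0))]
      congr 1; ext t
      rw [← add_mul, ← Complex.ofReal_add]
      congr 2
      by_cases ht : t ≤ 0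
      · simp [ht]
      · simp [ht, lt_of_not_ge ht]
  linarith [P.le_rate hmem]

end IsProfile

namespace IsProfile

variable {b c τ : ℝ} {φ : ℝ → ℝ}

lemma rate_mul_sub (P : IsProfile b c τ φ) :
    1 / (1 - b * Real.exp (-(rate φ * c * τ))) = rate φ * (c - rate φ) := by
  have := P.chi0_rate
  unfold chi0 at this
  linarith

lemma rate_lt (P : IsProfile b c τ φ) : rate φ < c := by
  have h := P.rate_mul_sub
  have h1 := one_div_pos.2 (P.one_sub_delay_pos P.rate_pos.le)
  rw [h] at h1
  exact sub_pos.1 (pos_of_mul_pos_right h1 P.rate_pos.le)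

lemma chi0_pos_right (P : IsProfile b c τ φ) : 0 < chi0 b c τ c := by
  have h1 := one_div_pos.2 (P.one_sub_delay_pos P.c_pos.le)
  unfold chi0
  linarith

/-- The derivative of the characteristic function. -/
noncomputable def chi0' (b c τ x : ℝ) : ℝ :=
  2 * x - c - c * τ * (b * Real.exp (-(x * c * τ))) / (1 - b * Real.exp (-(x * c * τ))) ^ 2

lemma hasDerivAt_chiC (P : IsProfile b c τ φ) {x : ℝ} (hx : 0 ≤ x) :
    HasDerivAt (chiC b c τ) (chi0' b c τ x : ℂ) (x : ℂ) := by
  have hne := P.one_sub_delay_ne (z := (x : ℂ)) (by simpa)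
  have he : HasDerivAt (fun z : ℂ => 1 - (b : ℂ) * Complex.exp (-(z * c * τ)))
      (-(b * (Complex.exp (-(x * c * τ)) * (-(1 * c * τ))))) (x : ℂ) :=
    ((((((hasDerivAt_id' (x : ℂ)).mul_const (c : ℂ)).mul_const (τ : ℂ)).fun_neg).cexp).const_mul
      (b : ℂ)).const_sub 1
  have h := (((hasDerivAt_id' (x : ℂ)).fun_pow 2).fun_sub
    ((hasDerivAt_id' (x : ℂ)).const_mul (c : ℂ))).fun_add (he.fun_inv hne)
  unfold chiC
  simp only [one_div]
  refine h.congr_deriv ?_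
  unfold chi0'
  push_cast
  ring

lemma hasDerivAt_chi0 (P : IsProfile b c τ φ) {x : ℝ} (hx : 0 ≤ x) :
    HasDerivAt (chi0 b c τ) (chi0' b c τ x) x := by
  have h := (P.hasDerivAt_chiC hx).real_of_complex
  simpa [chiC_ofReal] using h

lemma chi0'_rate_nonpos (P : IsProfile b c τ φ) : chi0' b c τ (rate φ) ≤ 0 := by
  have h := (hasDerivAt_iff_tendsto_slope.1 (P.hasDerivAt_chi0 P.rate_pos.le)).mono_left
    (nhdsWithin_mono _ fun x (hx : x ∈ Set.Iio (rate φ)) => hx.ne)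
  refine le_of_tendsto h ?_
  filter_upwards [Ioo_mem_nhdsLT P.rate_pos] with x hx
  rw [slope_def_field, P.chi0_rate, sub_zero]
  exact div_nonpos_of_nonneg_of_nonpos (P.chi0_pos hx.1 hx.2).le (by linarith [hx.2])

lemma exists_zero_gt (P : IsProfile b c τ φ) (hneg : chi0' b c τ (rate φ) < 0) :
    ∃ x, rate φ < x ∧ chi0 b c τ x = 0 := by
  have h := (hasDerivAt_iff_tendsto_slope.1 (P.hasDerivAt_chi0 P.rate_pos.le)).mono_left
    (nhdsWithin_mono _ fun x (hx : x ∈ Set.Ioi (rate φ)) => hx.ne')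
  obtain ⟨x, hx, hx1, hx2⟩ := ((h.eventually_lt_const hneg).and
    (Ioo_mem_nhdsGT P.rate_lt)).exists
  rw [slope_def_field, P.chi0_rate, sub_zero, div_lt_iff₀ (sub_pos.2 hx1), zero_mul] at hx
  have hcont : ContinuousOn (chi0 b c τ) (Set.Icc x c) := fun y hy =>
    (P.hasDerivAt_chi0 (P.rate_pos.le.trans (hx1.le.trans hy.1))).continuousAt.continuousWithinAt
  obtain ⟨y, hy, hy0⟩ := intermediate_value_Icc hx2.le hcont ⟨hx.le, P.chi0_pos_right.le⟩
  exact ⟨y, hx1.trans_le hy.1, hy0⟩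

/-- Strong convexity of the characteristic function. -/
lemma sq_le_chi0 (P : IsProfile b c τ φ) (hD : chi0' b c τ (rate φ) = 0) {x : ℝ} (hx : 0 < x) :
    (x - rate φ) ^ 2 ≤ chi0 b c τ x := by
  have hq0 := P.one_sub_delay_pos P.rate_pos.le
  have hq := P.one_sub_delay_pos hx.le
  have h0 := P.chi0_rate
  unfold chi0 at h0 ⊢
  unfold chi0' at hD
  set l := rate φ
  set u := b * Real.exp (-(l * c * τ)) with hu
  set q := 1 - b * Real.exp (-(x * c * τ)) with hq'
  have hqle : q ≤ (1 - u) + c * τ * u * (x - l) := by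
    have h1 : b * Real.exp (-(x * c * τ)) = u * Real.exp (-((x - l) * c * τ)) := by
      rw [hu, mul_assoc b, ← Real.exp_add]; ring_nf
    have h2 := Real.add_one_le_exp (-((x - l) * c * τ))
    have hu0 : 0 < u := mul_pos P.b_mem.1 (Real.exp_pos _)
    rw [hq', h1]
    nlinarith
  have hdiv : 1 / (1 - u) - (q - (1 - u)) / (1 - u) ^ 2 ≤ 1 / q := by
    rw [← sub_nonneg]
    have : 1 / q - (1 / (1 - u) - (q - (1 - u)) / (1 - u) ^ 2)
        = (q - (1 - u)) ^ 2 / (q * (1 - u) ^ 2) := by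
      field_simp; ring
    rw [this]; positivity
  have h3 : (q - (1 - u)) / (1 - u) ^ 2 ≤ c * τ * u / (1 - u) ^ 2 * (x - l) := by
    rw [div_mul_eq_mul_div]
    gcongr
    linarith
  have h4 : c * τ * u / (1 - u) ^ 2 * (x - l) = (2 * l - c) * (x - l) := by
    rw [show c * τ * u / (1 - u) ^ 2 = 2 * l - c by linarith]
  nlinarith

lemma le_norm_quadratic (z : ℂ) (c : ℝ) : z.im ^ 2 ≤ ‖z ^ 2 - c * z‖ := by
  rw [show z ^ 2 - c * z = z * (z - c) by ring, norm_mul]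
  have h1 := Complex.abs_im_le_norm z
  have h2 := Complex.abs_im_le_norm (z - c)
  simp only [Complex.sub_im, Complex.ofReal_im, sub_zero] at h2
  rw [← sq_abs, sq]
  gcongr

lemma half_sq_le_norm_chiC (P : IsProfile b c τ φ) {z : ℂ} (hz : 0 ≤ z.re)
    (him : 2 / (1 - b) ≤ z.im ^ 2) : z.im ^ 2 / 2 ≤ ‖chiC b c τ z‖ := by
  have h1 := (P.norm_symbol_le hz).trans (P.symbol_le hz)
  have h2 := le_norm_quadratic z c
  have h3 := norm_sub_le_norm_add (z ^ 2 - c * z)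
    (1 / (1 - (b : ℂ) * Complex.exp (-(z * c * τ))))
  have h4 : 2 / (1 - b) = 2 * (1 / (1 - b)) := by ring
  unfold chiC
  linarith

lemma eq_rate_of_chiC_eq_zero (P : IsProfile b c τ φ) {z : ℂ} (hz : z.re = rate φ)
    (h : chiC b c τ z = 0) : z = rate φ := by
  have h1 := P.norm_symbol_le (z := z) (by rw [hz]; exact P.rate_pos.le)
  rw [hz, P.rate_mul_sub] at h1
  have h2 : ‖z * (z - c)‖ ≤ rate φ * (c - rate φ) := by
    refine le_trans (le_of_eq ?_) h1
    unfold chiC at h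
    rw [← norm_neg]
    congr 1
    linear_combination -h
  have h3 : ‖z * (z - c)‖ ^ 2 = (rate φ ^ 2 + z.im ^ 2) * ((c - rate φ) ^ 2 + z.im ^ 2) := by
    rw [norm_mul, mul_pow, Complex.sq_norm, Complex.sq_norm, Complex.normSq_apply,
      Complex.normSq_apply]
    simp [hz]
    ring
  have h4 : 0 < rate φ * (c - rate φ) := mul_pos P.rate_pos (sub_pos.2 P.rate_lt)
  have h5 := pow_le_pow_left₀ (norm_nonneg _) h2 2
  rw [h3] at h5
  have h6 : z.im ^ 2 ≤ 0 := by
    by_contra! hpos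
    nlinarith [sq_nonneg (rate φ), sq_nonneg (c - rate φ), pow_pos P.rate_pos 2,
      mul_pos hpos (pow_pos P.rate_pos 2), mul_nonneg hpos.le (sq_nonneg (c - rate φ)),
      mul_pos hpos hpos]
  refine Complex.ext hz ?_
  simpa using le_antisymm h6 (sq_nonneg _)

lemma exists_strip (P : IsProfile b c τ φ) {H : ℂ → ℂ} {k : ℕ}
    (hH : DifferentiableOn ℂ H {z | z.re ∈ Set.Ioi 0})
    (hfac : ∀ z, chiC b c τ z = (z - rate φ) ^ k * H z) (hl : H (rate φ) ≠ 0) :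
    ∃ δ > 0, δ < rate φ ∧ ∀ z : ℂ, |z.re - rate φ| ≤ δ → H z ≠ 0 := by
  have hl0 := P.rate_pos
  set S : Set ℂ := Set.Icc (rate φ / 2) (2 * rate φ) ×ℂ
    Set.Icc (-(2 / (1 - b) + 1)) (2 / (1 - b) + 1)
  have hS : IsCompact S := isCompact_Icc.reProdIm isCompact_Icc
  have hSre {z : ℂ} (hz : z ∈ S) : 0 < z.re := by
    have := hz.1.1
    change rate φ / 2 ≤ z.re at this
    linarith
  have hcont : ContinuousOn H S := hH.continuousOn.mono fun z hz => hSre hz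
  have hK : IsCompact (S ∩ H ⁻¹' {0}) :=
    hS.of_isClosed_subset (hcont.preimage_isClosed_of_isClosed hS.isClosed isClosed_singleton)
      Set.inter_subset_left
  have hzero {z : ℂ} (hz0 : H z = 0) : chiC b c τ z = 0 := by rw [hfac, hz0, mul_zero]
  have hb2 : 0 < 2 / (1 - b) := div_pos two_pos P.one_sub_pos
  have him {z : ℂ} (hz : 0 ≤ z.re) (hz0 : H z = 0) :
      z.im ∈ Set.Icc (-(2 / (1 - b) + 1)) (2 / (1 - b) + 1) := by
    rw [Set.mem_Icc, ← abs_le]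
    by_contra! hlt
    have h1 : 2 / (1 - b) < z.im ^ 2 := by rw [← sq_abs]; nlinarith
    have h2 := P.half_sq_le_norm_chiC hz h1.le
    rw [hzero hz0, norm_zero] at h2
    linarith
  obtain ⟨δ, hδ, hδK⟩ : ∃ δ > 0, ∀ z ∈ S ∩ H ⁻¹' {0}, δ ≤ |z.re - rate φ| := by
    rcases (S ∩ H ⁻¹' {0}).eq_empty_or_nonempty with he | hne
    · exact ⟨1, one_pos, fun z hz => by simp [he] at hz⟩
    · obtain ⟨w, hw, hmin⟩ := hK.exists_isMinOn hne
        (f := fun z : ℂ => |z.re - rate φ|) (by fun_prop)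
      refine ⟨|w.re - rate φ|, abs_pos.2 fun h0 => ?_, fun z hz => hmin hz⟩
      have := P.eq_rate_of_chiC_eq_zero (sub_eq_zero.1 h0) (hzero hw.2)
      exact hl (this ▸ hw.2)
  refine ⟨min (δ / 2) (rate φ / 2), by positivity, (min_le_right _ _).trans_lt (by linarith),
    fun z hz hz0 => ?_⟩
  have h1 := abs_le.1 (hz.trans (min_le_right _ _))
  have h2 := hδK z ⟨⟨⟨by linarith, by linarith⟩, him (by linarith) hz0⟩, hz0⟩
  linarith [hz.trans (min_le_left _ _)]

lemma setOf_re_pos_mem_nhds (P : IsProfile b c τ φ) :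
    {z : ℂ | z.re ∈ Set.Ioi 0} ∈ nhds (rate φ : ℂ) :=
  (isOpen_Ioi.preimage Complex.continuous_re).mem_nhds (by simpa using P.rate_pos)

lemma differentiableOn_chiC (P : IsProfile b c τ φ) :
    DifferentiableOn ℂ (chiC b c τ) {z | z.re ∈ Set.Ioi 0} := fun _ hz =>
  (P.differentiableAt_chiC (le_of_lt hz)).differentiableWithinAt

lemma chiC_eq_dslope (P : IsProfile b c τ φ) (z : ℂ) :
    chiC b c τ z = (z - rate φ) * dslope (chiC b c τ) (rate φ) z := by
  have := sub_smul_dslope (chiC b c τ) (rate φ : ℂ) z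
  rw [chiC_ofReal, P.chi0_rate] at this
  simpa using this.symm

lemma dslope_chiC_rate (P : IsProfile b c τ φ) :
    dslope (chiC b c τ) (rate φ) (rate φ) = chi0' b c τ (rate φ) := by
  rw [dslope_same, (P.hasDerivAt_chiC P.rate_pos.le).deriv]

lemma chiC_eq_dslope_dslope (P : IsProfile b c τ φ) (hD : chi0' b c τ (rate φ) = 0) (z : ℂ) :
    chiC b c τ z = (z - rate φ) ^ 2 * dslope (dslope (chiC b c τ) (rate φ)) (rate φ) z := by
  have := sub_smul_dslope (dslope (chiC b c τ) (rate φ)) (rate φ : ℂ) z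
  rw [P.dslope_chiC_rate, hD] at this
  rw [P.chiC_eq_dslope z, sq, mul_assoc]
  congr 1
  simpa using this.symm

lemma one_le_re_dslope_dslope (P : IsProfile b c τ φ) (hD : chi0' b c τ (rate φ) = 0) :
    1 ≤ (dslope (dslope (chiC b c τ) (rate φ)) (rate φ) (rate φ)).re := by
  set H := dslope (dslope (chiC b c τ) (rate φ)) (rate φ)
  have hH : ContinuousAt H (rate φ : ℂ) :=
    (((Complex.differentiableOn_dslope P.setOf_re_pos_mem_nhds).2
      ((Complex.differentiableOn_dslope P.setOf_re_pos_mem_nhds).2 P.differentiableOn_chiC)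
      ).differentiableAt P.setOf_re_pos_mem_nhds).continuousAt
  have hlim : Tendsto (fun x : ℝ => (H x).re) (nhdsWithin (rate φ) (Set.Ioi (rate φ)))
      (nhds (H (rate φ)).re) :=
    ((Complex.continuous_re.continuousAt.comp hH).comp
      Complex.continuous_ofReal.continuousAt).mono_left nhdsWithin_le_nhds
  refine ge_of_tendsto hlim ?_
  filter_upwards [self_mem_nhdsWithin] with x hx
  have hx' : 0 < x - rate φ := sub_pos.2 hx
  have h1 := P.chiC_eq_dslope_dslope hD x
  rw [chiC_ofReal] at h1
  have h2 : H x = ((chi0 b c τ x / (x - rate φ) ^ 2 : ℝ) : ℂ) := by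
    have : ((x : ℂ) - rate φ) ^ 2 ≠ 0 := by
      have := pow_ne_zero 2 hx'.ne'
      exact_mod_cast this
    push_cast
    rw [h1, mul_div_cancel_left₀ _ this]
  rw [h2, Complex.ofReal_re, le_div_iff₀ (by positivity), one_mul]
  exact P.sq_le_chi0 hD (P.rate_pos.trans hx)

end IsProfile

lemma neg_mul_exp_le {α β t : ℝ} (hβ : 0 < β) : -t * Real.exp (α * t) ≤
    β⁻¹ * Real.exp ((α - β) * t) := by
  have h : -(β * t) ≤ Real.exp (-(β * t)) := by linarith [Real.add_one_le_exp (-(β * t))]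
  rw [show (α - β) * t = -(β * t) + α * t by ring, Real.exp_add, ← mul_assoc]
  refine mul_le_mul_of_nonneg_right ?_ (Real.exp_pos _).le
  rw [← div_eq_inv_mul, le_div_iff₀ hβ]
  linarith

lemma norm_mul_cexp_le {a : ℂ} (ha : 0 < a.re) {t : ℝ} (ht : t ≤ 0) :
    ‖(t : ℂ) * Complex.exp (a * t)‖ ≤ (a.re / 2)⁻¹ * Real.exp (a.re / 2 * t) := by
  have := neg_mul_exp_le (α := a.re) (t := t) (half_pos ha)
  rw [norm_mul, Complex.norm_exp, Complex.norm_real, Real.norm_of_nonpos ht]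
  simpa [sub_half] using this

lemma integrableOn_mul_cexp_Iic {a : ℂ} (ha : 0 < a.re) :
    IntegrableOn (fun t : ℝ => (t : ℂ) * Complex.exp (a * t)) (Set.Iic 0) := by
  refine ((integrableOn_exp_mul_Iic (half_pos ha) 0).const_mul (a.re / 2)⁻¹).mono'
    (by fun_prop) ?_
  filter_upwards [ae_restrict_mem measurableSet_Iic] with t ht
  exact norm_mul_cexp_le ha ht

lemma integral_mul_cexp_Iic {a : ℂ} (ha : 0 < a.re) :
    ∫ t : ℝ in Set.Iic 0, (t : ℂ) * Complex.exp (a * t) = -(1 / a ^ 2) := by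
  have hne : a ≠ 0 := fun h => by simp [h] at ha
  have hlim {β : ℝ} (hβ : 0 < β) : Tendsto (fun t => Real.exp (β * t)) atBot (nhds 0) :=
    Real.tendsto_exp_atBot.comp (tendsto_id.const_mul_atBot hβ)
  have h1 : Tendsto (fun t : ℝ => (t : ℂ) * Complex.exp (a * t)) atBot (nhds 0) := by
    have h0 := (hlim (half_pos ha)).const_mul (a.re / 2)⁻¹
    rw [mul_zero] at h0
    refine squeeze_zero_norm' ?_ h0
    filter_upwards [eventually_le_atBot 0] with t ht
    exact norm_mul_cexp_le ha ht
  have h2 : Tendsto (fun t : ℝ => Complex.exp (a * t)) atBot (nhds 0) := by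
    refine squeeze_zero_norm (fun t => ?_) (hlim ha)
    simp [Complex.norm_exp]
  have h := integral_Iic_of_hasDerivAt_of_tendsto'
    (f := fun t : ℝ => a⁻¹ * ((t : ℂ) * Complex.exp (a * t)) - (a ^ 2)⁻¹ * Complex.exp (a * t))
    (f' := fun t : ℝ => (t : ℂ) * Complex.exp (a * t)) (a := 0) (m := 0) (fun t _ => ?_)
    (integrableOn_mul_cexp_Iic ha) (by simpa using (h1.const_mul a⁻¹).sub (h2.const_mul (a ^ 2)⁻¹))
  · rw [h]; simp
  · have he : HasDerivAt (fun z : ℂ => Complex.exp (a * z))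
        (Complex.exp (a * t) * (a * 1)) (t : ℂ) :=
      ((hasDerivAt_id' (t : ℂ)).const_mul a).cexp
    have h := ((((hasDerivAt_id' (t : ℂ)).fun_mul he).const_mul a⁻¹).fun_sub
      (he.const_mul (a ^ 2)⁻¹)).comp_ofReal
    refine h.congr_deriv ?_
    field_simp
    ring

/-- A continuous function on `(-∞, 0]` whose Laplace transform is
`A / (l - z) + B / (l - z) ^ 2` up to a regular term. -/
noncomputable def model (l : ℝ) (A B : ℂ) : ℝ → ℂ :=
  (Set.Iic 0).indicator fun t : ℝ =>
    (A - B * t) * (Complex.exp (l * t) - Complex.exp ((l + 1) * t))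

lemma continuous_model (l : ℝ) (A B : ℂ) : Continuous (model l A B) := by
  unfold model
  refine continuous_indicator (fun t ht => ?_) (by fun_prop)
  have : t = 0 := by simpa using ht
  simp [this]

lemma model_mul_cexp (l : ℝ) (A B z : ℂ) (t : ℝ) :
    model l A B t * Complex.exp (-(z * t)) = (Set.Iic 0).indicator (fun t : ℝ =>
      A * (Complex.exp ((l - z) * t) - Complex.exp ((l + 1 - z) * t))
      - B * (t * Complex.exp ((l - z) * t) - t * Complex.exp ((l + 1 - z) * t))) t := by
  unfold model
  simp only [Set.indicator_apply]
  split_ifs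
  · rw [show (l - z) * (t : ℂ) = l * t + -(z * t) by ring,
      show (l + 1 - z) * (t : ℂ) = (l + 1) * t + -(z * t) by ring, Complex.exp_add, Complex.exp_add]
    ring
  · simp

lemma integrable_model {l : ℝ} (A B : ℂ) {z : ℂ} (hz : z.re < l) :
    Integrable fun t : ℝ => model l A B t * Complex.exp (-(z * t)) := by
  have h1 : 0 < ((l : ℂ) - z).re := by simpa using hz
  have h2 : 0 < ((l : ℂ) + 1 - z).re := by simp; linarith
  simp_rw [model_mul_cexp]
  rw [integrable_indicator_iff measurableSet_Iic]
  exact (((integrableOn_exp_mul_complex_Iic h1 0).sub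
    (integrableOn_exp_mul_complex_Iic h2 0)).const_mul A).sub
    (((integrableOn_mul_cexp_Iic h1).sub (integrableOn_mul_cexp_Iic h2)).const_mul B)

lemma laplace_model {l : ℝ} (A B : ℂ) {z : ℂ} (hz : z.re < l) :
    laplace (model l A B) z = A * (1 / (l - z) - 1 / (l + 1 - z))
      + B * (1 / (l - z) ^ 2 - 1 / (l + 1 - z) ^ 2) := by
  have h1 : 0 < ((l : ℂ) - z).re := by simpa using hz
  have h2 : 0 < ((l : ℂ) + 1 - z).re := by simp; linarith
  unfold laplace
  simp_rw [model_mul_cexp]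
  rw [integral_indicator measurableSet_Iic]
  have e1 := integrableOn_exp_mul_complex_Iic h1 0
  have e2 := integrableOn_exp_mul_complex_Iic h2 0
  have m1 := integrableOn_mul_cexp_Iic h1
  have m2 := integrableOn_mul_cexp_Iic h2
  refine (integral_sub ((e1.sub e2).const_mul A) ((m1.sub m2).const_mul B)).trans ?_
  rw [integral_const_mul, integral_const_mul]
  simp only [Pi.sub_apply]
  rw [integral_sub e1 e2, integral_sub m1 m2, integral_exp_mul_complex_Iic h1,
    integral_exp_mul_complex_Iic h2, integral_mul_cexp_Iic h1, integral_mul_cexp_Iic h2]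
  simp
  ring

/-- The regular part of `E z / (z - l) ^ 2` at `l`, corrected by the transform of the smooth part
of `model`. -/
noncomputable def regularPart (E : ℂ → ℂ) (l : ℝ) (z : ℂ) : ℂ :=
  dslope (dslope E l) l z - deriv E l / (l + 1 - z) + E l / (l + 1 - z) ^ 2

lemma regularPart_eq (E : ℂ → ℂ) (l : ℝ) {z : ℂ} (hz : z ≠ l) :
    regularPart E l z = E z / (z - l) ^ 2 - (-deriv E l * (1 / (l - z) - 1 / (l + 1 - z))
      + E l * (1 / (l - z) ^ 2 - 1 / (l + 1 - z) ^ 2)) := by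
  have h1 := sub_smul_dslope E (l : ℂ) z
  have h2 := sub_smul_dslope (dslope E l) (l : ℂ) z
  rw [dslope_same] at h2
  simp only [smul_eq_mul] at h1 h2
  have hz' : z - (l : ℂ) ≠ 0 := sub_ne_zero.2 hz
  have h3 : dslope (dslope E l) l z = (E z - E l - deriv E l * (z - l)) / (z - l) ^ 2 := by
    rw [eq_div_iff (pow_ne_zero 2 hz')]
    linear_combination (z - l) * h2 + h1
  have h4 : (l : ℂ) - z = -(z - l) := by ring
  unfold regularPart
  rw [h3, h4, neg_sq, div_neg]
  field_simp
  ring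

lemma norm_regularPart_le (E : ℂ → ℂ) {l M : ℝ} {z : ℂ} (hE : ‖E z‖ ≤ M) (hz : z.im ≠ 0) :
    ‖regularPart E l z‖ ≤ (M + ‖deriv E l‖ + 2 * ‖E l‖) / z.im ^ 2 := by
  have hne : z ≠ l := fun h => hz (by simp [h])
  have him (x : ℝ) : |z.im| ≤ ‖(x : ℂ) - z‖ := by
    simpa using Complex.abs_im_le_norm ((x : ℂ) - z)
  have hpos : 0 < |z.im| := abs_pos.2 hz
  have hsub (x : ℝ) : (x : ℂ) - z ≠ 0 := norm_pos_iff.1 (hpos.trans_le (him x))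
  have hsq (x : ℝ) : ‖1 / ((x : ℂ) - z) ^ 2‖ ≤ 1 / z.im ^ 2 := by
    rw [norm_div, norm_one, norm_pow, ← sq_abs z.im]
    exact one_div_le_one_div_of_le (by positivity) (pow_le_pow_left₀ hpos.le (him x) 2)
  have h0 := hsq l
  have h1 := hsq (l + 1)
  have h2 : ‖1 / ((l : ℂ) - z) - 1 / (((l + 1 : ℝ) : ℂ) - z)‖ ≤ 1 / z.im ^ 2 := by
    rw [div_sub_div _ _ (hsub l) (hsub (l + 1)), norm_div, norm_mul, ← sq_abs z.im, sq]
    have : ‖1 * (((l + 1 : ℝ) : ℂ) - z) - ((l : ℂ) - z) * 1‖ = 1 := by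
      have h : 1 * (((l + 1 : ℝ) : ℂ) - z) - ((l : ℂ) - z) * 1 = 1 := by push_cast; ring
      rw [h, norm_one]
    rw [this]
    exact one_div_le_one_div_of_le (by positivity)
      (mul_le_mul (him l) (him (l + 1)) hpos.le (norm_nonneg _))
  have h3 : ‖E z / (z - l) ^ 2‖ ≤ M * (1 / z.im ^ 2) := by
    rw [← mul_one_div, norm_mul, show (z - l) ^ 2 = ((l : ℂ) - z) ^ 2 by ring]
    exact mul_le_mul hE h0 (norm_nonneg _) ((norm_nonneg _).trans hE)
  have h4 := norm_sub_le (1 / ((l : ℂ) - z) ^ 2) (1 / (((l + 1 : ℝ) : ℂ) - z) ^ 2)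
  rw [regularPart_eq E l hne, show (l : ℂ) + 1 = ((l + 1 : ℝ) : ℂ) by push_cast; rfl]
  calc _ ≤ M * (1 / z.im ^ 2) + (‖deriv E l‖ * (1 / z.im ^ 2)
        + ‖E l‖ * (1 / z.im ^ 2 + 1 / z.im ^ 2)) := by
        refine (norm_sub_le _ _).trans (add_le_add h3 ((norm_add_le _ _).trans (add_le_add ?_ ?_)))
        · rw [norm_mul, norm_neg]; gcongr
        · rw [norm_mul]; gcongr; linarith
    _ = _ := by ring

/-- If the Laplace transform of `f` continues meromorphically across the line `re z = l`, with at
most a double pole at `l`, then the pole determines the leading behaviour of `f` at `-∞`. -/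
lemma exists_expansion {f : ℝ → ℂ} (hf : Continuous f) {l δ δ' M Y : ℝ} (hδ : 0 < δ) (hδ1 : δ < 1)
    (hδ' : δ < δ') {E : ℂ → ℂ}
    (hE : DifferentiableOn ℂ E {z | z.re ∈ Set.Ioo (l - δ') (l + δ')})
    (hfint : Integrable fun t : ℝ => f t * Complex.exp (-((l - δ : ℝ) * t)))
    (hlap : ∀ z : ℂ, z.re = l - δ → (z - l) ^ 2 * laplace f z = E z)
    (hM : ∀ z : ℂ, z.re ∈ Set.Icc (l - δ) (l + δ) → Y ≤ |z.im| → ‖E z‖ ≤ M) :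
    ∃ C, ∀ t ≤ 0, ‖f t - (-deriv E l - E l * t) * Complex.exp (l * t)‖
      ≤ C * Real.exp ((l + δ) * t) := by
  have hsub : {z : ℂ | z.re ∈ Set.Icc (l - δ) (l + δ)} ⊆
      {z | z.re ∈ Set.Ioo (l - δ') (l + δ')} := fun z hz =>
    ⟨by linarith [hz.1], by linarith [hz.2]⟩
  have hV : {z : ℂ | z.re ∈ Set.Ioo (l - δ') (l + δ')} ∈ nhds (l : ℂ) :=
    (isOpen_Ioo.preimage Complex.continuous_re).mem_nhds
      (show _ ∧ _ from ⟨by simp; linarith, by simp; linarith⟩)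
  have hF : DifferentiableOn ℂ (regularPart E l) {z | z.re ∈ Set.Icc (l - δ) (l + δ)} := by
    have hdd := ((Complex.differentiableOn_dslope hV).2
      ((Complex.differentiableOn_dslope hV).2 hE)).mono hsub
    have hne : ∀ z ∈ {z : ℂ | z.re ∈ Set.Icc (l - δ) (l + δ)}, (l : ℂ) + 1 - z ≠ 0 := by
      intro z hz h
      have := congrArg Complex.re h
      simp only [Complex.sub_re, Complex.add_re, Complex.ofReal_re, Complex.one_re,
        Complex.zero_re] at this
      linarith [hz.2]
    have hden : DifferentiableOn ℂ (fun z : ℂ => (l : ℂ) + 1 - z)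
        {z : ℂ | z.re ∈ Set.Icc (l - δ) (l + δ)} := by fun_prop
    exact (hdd.sub ((differentiableOn_const _).div hden hne)).add
      ((differentiableOn_const _).div (hden.pow 2) fun z hz => pow_ne_zero 2 (hne z hz))
  obtain ⟨K, hK⟩ := ((isCompact_Icc (a := l - δ) (b := l + δ)).reProdIm
    (isCompact_Icc (a := -(max Y 1)) (b := max Y 1))).exists_bound_of_continuousOn
    (hF.continuousOn.mono fun z hz => hz.1)
  set M' := M + ‖deriv E l‖ + 2 * ‖E l‖
  have hbound (z : ℂ) (hz : z.re ∈ Set.Icc (l - δ) (l + δ)) :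
      ‖regularPart E l z‖ ≤ max (2 * M') (K * (1 + (max Y 1) ^ 2)) / (1 + z.im ^ 2) := by
    have hp : 0 < 1 + z.im ^ 2 := by positivity
    rw [le_div_iff₀ hp]
    rcases le_total |z.im| (max Y 1) with him | him
    · refine le_max_of_le_right ?_
      have h1 := hK z ⟨hz, abs_le.1 him⟩
      have h2 : z.im ^ 2 ≤ (max Y 1) ^ 2 := by rw [← sq_abs]; gcongr
      exact mul_le_mul h1 (by linarith) hp.le ((norm_nonneg _).trans h1)
    · refine le_max_of_le_left ?_
      have h1 : 1 ≤ z.im ^ 2 := by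
        rw [← sq_abs]; nlinarith [le_max_right Y 1]
      have h2 := norm_regularPart_le E (l := l) (hM z hz ((le_max_left _ _).trans him))
        (fun h => by norm_num [h] at h1)
      rw [le_div_iff₀ (by linarith)] at h2
      nlinarith [norm_nonneg (regularPart E l z)]
  set A := -deriv E l
  set B := E l
  have hlδ : ((l - δ : ℝ) : ℂ).re < l := by simpa using hδ
  have hline (y : ℝ) : laplace (fun t => f t - model l A B t) (((l - δ : ℝ) : ℂ) + y * Complex.I) =
      regularPart E l (((l - δ : ℝ) : ℂ) + y * Complex.I) := by
    set z : ℂ := ((l - δ : ℝ) : ℂ) + y * Complex.I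
    have hzre : z.re = l - δ := by simp [z]
    have hz : z ≠ l := fun h => by rw [h, Complex.ofReal_re] at hzre; linarith
    have hzl : z.re < l := by linarith
    have hintz : Integrable fun t : ℝ => f t * Complex.exp (-(z * t)) := by
      refine integrable_mul_cexp hf.aestronglyMeasurable
        (hfint.norm.congr (ae_of_all _ fun t => ?_))
      simp only [norm_mul_cexp, Complex.ofReal_re, hzre]
    rw [regularPart_eq E l hz, ← hlap z hzre,
      mul_div_cancel_left₀ _ (pow_ne_zero 2 (sub_ne_zero.2 hz)), ← laplace_model A B hzl]
    unfold laplace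
    rw [← integral_sub hintz (integrable_model A B hzl)]
    congr 1; ext t
    rw [sub_mul]
  obtain ⟨C, hC⟩ := exists_bound_of_laplace (f := fun t => f t - model l A B t)
    (hf.sub (continuous_model l A B)) (F := regularPart E l) (show l - δ ≤ l + δ by linarith)
    ((hfint.sub (integrable_model A B hlδ)).congr (ae_of_all _ fun t => by simp [sub_mul]))
    hline hF hbound
  refine ⟨C + (‖A‖ + ‖B‖ * (1 - δ)⁻¹), fun t ht => ?_⟩
  have h1 : f t - (A - B * t) * Complex.exp (l * t) =
      (f t - model l A B t) - (A - B * t) * Complex.exp ((l + 1) * t) := by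
    rw [model, Set.indicator_of_mem (Set.mem_Iic.2 ht)]
    ring
  have h2 : ‖(A - B * t) * Complex.exp ((l + 1) * t)‖ ≤
      (‖A‖ + ‖B‖ * (1 - δ)⁻¹) * Real.exp ((l + δ) * t) := by
    have h3 : ‖A - B * t‖ ≤ ‖A‖ + ‖B‖ * -t := by
      refine (norm_sub_le _ _).trans_eq ?_
      rw [norm_mul, Complex.norm_real, Real.norm_of_nonpos ht]
    have h4 := neg_mul_exp_le (α := l + 1) (t := t) (sub_pos.2 hδ1)
    rw [show l + 1 - (1 - δ) = l + δ by ring] at h4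
    have h5 : Real.exp ((l + 1) * t) ≤ Real.exp ((l + δ) * t) :=
      Real.exp_le_exp.2 (by nlinarith)
    have h6 : ‖Complex.exp (((l : ℂ) + 1) * t)‖ = Real.exp ((l + 1) * t) := by
      rw [Complex.norm_exp]; simp
    rw [norm_mul, h6]
    calc _ ≤ (‖A‖ + ‖B‖ * -t) * Real.exp ((l + 1) * t) := by gcongr
      _ = ‖A‖ * Real.exp ((l + 1) * t) + ‖B‖ * (-t * Real.exp ((l + 1) * t)) := by ring
      _ ≤ ‖A‖ * Real.exp ((l + δ) * t) + ‖B‖ * ((1 - δ)⁻¹ * Real.exp ((l + δ) * t)) := by gcongr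
      _ = _ := by ring
  rw [h1, add_mul C]
  exact (norm_sub_le _ _).trans (add_le_add (hC t) h2)

/-- Translating an expansion at `-∞`, in relative form. -/
lemma isLittleO_of_expansion {f : ℝ → ℝ} {l A B C δ : ℝ} (hδ : 0 < δ)
    (h : ∀ t ≤ 0, |f t - (A - B * t) * Real.exp (l * t)| ≤ C * Real.exp ((l + δ) * t)) (s : ℝ) :
    (fun t => f (t + s) * Real.exp (-(l * t)) - (A - B * (t + s)) * Real.exp (l * s))
      =o[atBot] fun t => Real.exp (δ / 2 * t) := by
  have hO : (fun t => f (t + s) * Real.exp (-(l * t)) - (A - B * (t + s)) * Real.exp (l * s))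
      =O[atBot] fun t => Real.exp (δ * t) := by
    refine IsBigO.of_bound (C * Real.exp ((l + δ) * s)) ?_
    filter_upwards [eventually_le_atBot (-s)] with t ht
    have h1 := mul_le_mul_of_nonneg_right (h (t + s) (by linarith)) (Real.exp_pos (-(l * t))).le
    have h2 : Real.exp (l * (t + s)) * Real.exp (-(l * t)) = Real.exp (l * s) := by
      rw [← Real.exp_add]; ring_nf
    have h3 : Real.exp ((l + δ) * (t + s)) * Real.exp (-(l * t)) =
        Real.exp ((l + δ) * s) * Real.exp (δ * t) := by
      rw [← Real.exp_add, ← Real.exp_add]; ring_nf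
    rw [← abs_of_pos (Real.exp_pos (-(l * t))), ← abs_mul, abs_of_pos (Real.exp_pos (-(l * t))),
      sub_mul, mul_assoc (A - B * (t + s)), h2, mul_assoc C, h3, ← mul_assoc] at h1
    rwa [Real.norm_eq_abs, Real.norm_of_nonneg (Real.exp_pos _).le]
  refine hO.trans_isLittleO (Real.isLittleO_exp_comp_exp_comp.2 ?_)
  have : Tendsto (fun t : ℝ => (-(δ / 2)) * t) atBot atTop :=
    tendsto_id.const_mul_atBot_of_neg (by linarith)
  exact this.congr fun t => by ring

namespace IsProfile

variable {b c τ : ℝ} {φ : ℝ → ℝ}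

lemma norm_laplace_nonlin_le (P : IsProfile b c τ φ) {x y : ℝ} (hx : 0 < x) (hy : y < 2 * rate φ)
    {z : ℂ} (hz : z.re ∈ Set.Icc x y) :
    ‖laplace (fun t => (nonlin b c τ φ t : ℂ)) z‖ ≤
      (∫ t, nonlin b c τ φ t * Real.exp (-(x * t)))
        + ∫ t, nonlin b c τ φ t * Real.exp (-(y * t)) := by
  have hxy := hz.1.trans hz.2
  have hix := P.integrable_nonlin_real hx (hxy.trans_lt hy)
  have hiy := P.integrable_nonlin_real (hx.trans_le hxy) hy
  rw [← integral_add hix hiy]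
  refine norm_integral_le_of_norm_le (hix.add hiy) (ae_of_all _ fun t => ?_)
  rw [norm_mul_cexp, Complex.norm_real, Real.norm_of_nonneg (P.nonlin_nonneg t)]
  rw [← mul_add]
  refine mul_le_mul_of_nonneg_left ?_ (P.nonlin_nonneg t)
  have hex := Real.exp_pos (-(x * t))
  have hey := Real.exp_pos (-(y * t))
  rcases le_total 0 t with ht | ht
  · have : Real.exp (-(z.re * t)) ≤ Real.exp (-(x * t)) :=
      Real.exp_le_exp.2 (neg_le_neg (mul_le_mul_of_nonneg_right hz.1 ht))
    linarith
  · have : Real.exp (-(z.re * t)) ≤ Real.exp (-(y * t)) :=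
      Real.exp_le_exp.2 (neg_le_neg (mul_le_mul_of_nonpos_right hz.2 ht))
    linarith

lemma norm_sq_div_chiC_le (P : IsProfile b c τ φ) {z : ℂ} (hz : 0 ≤ z.re)
    (hre : |z.re - rate φ| ≤ 1) (him : max 1 (2 / (1 - b)) ≤ |z.im|) :
    ‖(z - rate φ) ^ 2 / chiC b c τ z‖ ≤ 4 := by
  have h1 : 1 ≤ |z.im| := (le_max_left _ _).trans him
  have h2 : |z.im| ≤ z.im ^ 2 := by rw [← sq_abs]; nlinarith
  have h3 := P.half_sq_le_norm_chiC hz (((le_max_right _ _).trans him).trans h2)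
  rw [norm_div, norm_pow, Complex.sq_norm, Complex.normSq_apply, div_le_iff₀ (by linarith)]
  have h4 := abs_le.1 hre
  simp only [Complex.sub_re, Complex.sub_im, Complex.ofReal_re, Complex.ofReal_im, sub_zero]
  nlinarith

/-- The numerator of the transform of the profile at its rightmost pole, when the characteristic
function is `(z - rate φ) ^ k * H z`. -/
noncomputable def numer (b c τ : ℝ) (φ : ℝ → ℝ) (H : ℂ → ℂ) (k : ℕ) (z : ℂ) : ℂ :=
  laplace (fun t => (nonlin b c τ φ t : ℂ)) z * ((z - rate φ) ^ (2 - k) / H z)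

lemma exists_profile_expansion (P : IsProfile b c τ φ) {H : ℂ → ℂ} {k : ℕ} (hk : k ≤ 2)
    (hH : DifferentiableOn ℂ H {z | z.re ∈ Set.Ioi 0})
    (hfac : ∀ z, chiC b c τ z = (z - rate φ) ^ k * H z) (hl : H (rate φ) ≠ 0) :
    ∃ δ > 0, ∃ C, ∀ t ≤ 0, |φ t - (-(deriv (numer b c τ φ H k) (rate φ)).re
      - (numer b c τ φ H k (rate φ)).re * t) * Real.exp (rate φ * t)|
        ≤ C * Real.exp ((rate φ + δ) * t) := by
  obtain ⟨δ₀, hδ₀, hδl, hne⟩ := P.exists_strip hH hfac hl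
  have hl0 := P.rate_pos
  set l := rate φ
  set δ := min δ₀ 1 / 2 with hδ_def
  have hδ : 0 < δ := by positivity
  have hδ2 : 2 * δ ≤ δ₀ := by linarith [min_le_left δ₀ 1]
  have hδ1 : 2 * δ ≤ 1 := by linarith [min_le_right δ₀ 1]
  have hpow (z : ℂ) : (z - l) ^ 2 = (z - l) ^ k * (z - l) ^ (2 - k) := by
    rw [← pow_add, Nat.add_sub_cancel' hk]
  have hdiff : DifferentiableOn ℂ (numer b c τ φ H k)
      {z | z.re ∈ Set.Ioo (l - δ₀) (l + δ₀)} := by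
    refine (P.differentiableOn_laplace_nonlin.mono fun z hz => ?_).mul
      (DifferentiableOn.div (by fun_prop) (hH.mono fun z hz => ?_) fun z hz => ?_)
    · exact ⟨by linarith [hz.1], by linarith [hz.2]⟩
    · exact Set.mem_Ioi.2 (show 0 < z.re by linarith [hz.1])
    · exact hne z (abs_le.2 ⟨by linarith [hz.1], by linarith [hz.2]⟩)
  have htrans (z : ℂ) (hz : z.re = l - δ) :
      (z - l) ^ 2 * laplace (fun t => (φ t : ℂ)) z = numer b c τ φ H k z := by
    have h0 : 0 < z.re := by linarith
    have hHz := hne z (by rw [hz]; simp [abs_of_pos hδ]; linarith)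
    have := P.chiC_mul_laplace_of_lt_rate h0 (show z.re < l by linarith)
    rw [numer, ← this, hfac, hpow]
    field_simp
    change _ = _ * (z - (l : ℂ)) ^ (2 - k)
    ring
  set M := ((∫ t, nonlin b c τ φ t * Real.exp (-((l - δ) * t)))
    + ∫ t, nonlin b c τ φ t * Real.exp (-((l + δ) * t))) * 4
  have hbound (z : ℂ) (hz : z.re ∈ Set.Icc (l - δ) (l + δ))
      (him : max 1 (2 / (1 - b)) ≤ |z.im|) : ‖numer b c τ φ H k z‖ ≤ M := by
    have hre : |z.re - l| ≤ δ := abs_le.2 ⟨by linarith [hz.1], by linarith [hz.2]⟩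
    have h0 : 0 < z.re := by linarith [hz.1]
    have hq : (z - l) ^ (2 - k) / H z = (z - l) ^ 2 / chiC b c τ z := by
      have hzl : z - l ≠ 0 := by
        intro h
        have := congrArg Complex.im h
        simp only [Complex.sub_im, Complex.ofReal_im, sub_zero, Complex.zero_im] at this
        have h1 := (le_max_left _ _).trans him
        norm_num [this] at h1
      rw [hfac, hpow, mul_div_mul_left _ _ (pow_ne_zero k hzl)]
    rw [numer, norm_mul, hq]
    refine mul_le_mul (P.norm_laplace_nonlin_le (by linarith) (show l + δ < 2 * l by linarith) hz)
      (P.norm_sq_div_chiC_le h0.le (by linarith) him) (norm_nonneg _) ?_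
    have h1 (x : ℝ) : 0 ≤ ∫ t, nonlin b c τ φ t * Real.exp (-(x * t)) :=
      integral_nonneg fun t => mul_nonneg (P.nonlin_nonneg t) (Real.exp_pos _).le
    exact add_nonneg (h1 _) (h1 _)
  obtain ⟨C, hC⟩ := exists_expansion (f := fun t => (φ t : ℂ)) (l := l) (δ := δ) (δ' := δ₀)
    (Complex.continuous_ofReal.comp P.smooth.continuous) hδ (by linarith) (by linarith) hdiff
    (P.integrable_of_lt_rate (z := ((l - δ : ℝ) : ℂ)) (by rw [Complex.ofReal_re]; linarith)
      (by rw [Complex.ofReal_re]; exact sub_lt_self _ hδ))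
    htrans hbound
  refine ⟨δ, hδ, C, fun t ht => (le_trans (le_of_eq ?_)
    ((Complex.abs_re_le_norm _).trans (hC t ht)))⟩
  rw [show Complex.exp ((l : ℂ) * t) = ((Real.exp (l * t) : ℝ) : ℂ) by push_cast; rfl,
    Complex.sub_re, Complex.re_mul_ofReal]
  simp

lemma laplace_nonlin_rate (P : IsProfile b c τ φ) :
    ∃ N : ℝ, 0 < N ∧ laplace (fun t => (nonlin b c τ φ t : ℂ)) (rate φ) = N := by
  obtain ⟨σ, hσ, h⟩ := P.exists_rates_half_lt (x := rate φ) (by linarith [P.rate_pos])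
  exact ⟨_, P.integral_nonlin_pos hσ P.rate_pos h, laplace_ofReal _ _⟩

/-- Pure exponential behaviour at `-∞` when the smallest characteristic zero is simple. -/
lemma exists_expansion_simple (P : IsProfile b c τ φ) (hD : chi0' b c τ (rate φ) < 0) :
    ∃ A > 0, ∃ δ > 0, ∃ C, ∀ t ≤ 0, |φ t - (A - 0 * t) * Real.exp (rate φ * t)|
      ≤ C * Real.exp ((rate φ + δ) * t) := by
  set H := dslope (chiC b c τ) (rate φ)
  have hH : DifferentiableOn ℂ H {z | z.re ∈ Set.Ioi 0} :=
    (Complex.differentiableOn_dslope P.setOf_re_pos_mem_nhds).2 P.differentiableOn_chiC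
  have hHl : H (rate φ) = chi0' b c τ (rate φ) := P.dslope_chiC_rate
  have hne : H (rate φ) ≠ 0 := by rw [hHl]; exact_mod_cast hD.ne
  obtain ⟨δ, hδ, C, hC⟩ := P.exists_profile_expansion (k := 1) one_le_two hH
    (fun z => by rw [pow_one]; exact P.chiC_eq_dslope z) hne
  obtain ⟨N, hN, hNl⟩ := P.laplace_nonlin_rate
  have hmem : {z : ℂ | z.re ∈ Set.Ioo 0 (2 * rate φ)} ∈ nhds (rate φ : ℂ) :=
    (isOpen_Ioo.preimage Complex.continuous_re).mem_nhds
      (show _ ∧ _ from ⟨by simpa using P.rate_pos, by simp; linarith [P.rate_pos]⟩)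
  have hd := (P.differentiableOn_laplace_nonlin.differentiableAt hmem).hasDerivAt.fun_mul
    (((hasDerivAt_id' (rate φ : ℂ)).sub_const (rate φ : ℂ)).fun_div
      (hH.differentiableAt P.setOf_re_pos_mem_nhds).hasDerivAt hne)
  have hderiv : deriv (numer b c τ φ H 1) (rate φ) = ((N / chi0' b c τ (rate φ) : ℝ) : ℂ) := by
    have heq : numer b c τ φ H 1 = fun z => laplace (fun t => (nonlin b c τ φ t : ℂ)) z *
        ((z - rate φ) / H z) := by
      ext z; simp [numer]
    rw [heq, hd.deriv, hNl, hHl]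
    have : ((chi0' b c τ (rate φ) : ℝ) : ℂ) ≠ 0 := by exact_mod_cast hD.ne
    push_cast
    field_simp
    ring
  have hzero : numer b c τ φ H 1 (rate φ) = 0 := by simp [numer]
  rw [hderiv, hzero, Complex.ofReal_re, Complex.zero_re] at hC
  exact ⟨_, neg_pos.2 (div_neg_of_pos_of_neg hN hD), δ, hδ, C, hC⟩

/-- Behaviour at `-∞` when the smallest characteristic zero is double. -/
lemma exists_expansion_double (P : IsProfile b c τ φ) (hD : chi0' b c τ (rate φ) = 0) :
    ∃ A, ∃ B > 0, ∃ δ > 0, ∃ C, ∀ t ≤ 0, |φ t - (A - B * t) * Real.exp (rate φ * t)|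
      ≤ C * Real.exp ((rate φ + δ) * t) := by
  set H := dslope (dslope (chiC b c τ) (rate φ)) (rate φ)
  have hH : DifferentiableOn ℂ H {z | z.re ∈ Set.Ioi 0} :=
    (Complex.differentiableOn_dslope P.setOf_re_pos_mem_nhds).2
      ((Complex.differentiableOn_dslope P.setOf_re_pos_mem_nhds).2 P.differentiableOn_chiC)
  have hre : 1 ≤ (H (rate φ)).re := P.one_le_re_dslope_dslope hD
  have hne : H (rate φ) ≠ 0 := fun h => by norm_num [h] at hre
  obtain ⟨δ, hδ, C, hC⟩ := P.exists_profile_expansion (k := 2) le_rfl hH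
    (P.chiC_eq_dslope_dslope hD) hne
  obtain ⟨N, hN, hNl⟩ := P.laplace_nonlin_rate
  refine ⟨_, _, ?_, δ, hδ, C, hC⟩
  have : numer b c τ φ H 2 (rate φ) = (N : ℂ) * (H (rate φ))⁻¹ := by
    simp [numer, hNl]
  rw [this, Complex.re_ofReal_mul, Complex.inv_re]
  exact mul_pos hN (div_pos (by linarith) (Complex.normSq_pos.2 hne))

end IsProfile

/-- A nondecreasing non-constant bounded `C²` solution of the profile
equation `φ'' − cφ' + (Bφ)(1 − (1−b)(SBφ)) = 0` with `φ(−∞)=0`, `φ(+∞)=1` has a strictly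
positive derivative; moreover `χ₀` has positive zeros `λ₂ ≤ λ₁` (with `λ₂` minimal) and
`φ(t+t_a) = e^{λ₂t}((−t)^j + j·d + o(e^{εt}))` as `t → −∞`, where `j = 0` if `λ₂ < λ₁`
and `j = 1` if `λ₂ = λ₁`. -/
theorem profile_asymptotics (b c τ : ℝ) (hb : b ∈ Set.Ioo (0 : ℝ) 1)
    (hc : 0 < c) (hτ : 0 < τ) (φ : ℝ → ℝ)
    (hmono : Monotone φ) (hnc : ∃ s t : ℝ, φ s ≠ φ t)
    (hbdd : ∃ C : ℝ, ∀ t, |φ t| ≤ C)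
    (hsm : ContDiff ℝ 2 φ)
    (heq : ∀ t : ℝ, deriv (deriv φ) t - c * deriv φ t
      + Bop b c τ φ t * (1 - (1 - b) * SBop b c τ φ t) = 0)
    (h0 : Tendsto φ atBot (nhds 0)) (h1 : Tendsto φ atTop (nhds 1)) :
    (∀ t : ℝ, 0 < deriv φ t) ∧
    ∃ l₂ l₁ : ℝ, 0 < l₂ ∧ l₂ ≤ l₁ ∧ chi0 b c τ l₂ = 0 ∧ chi0 b c τ l₁ = 0 ∧
      (∀ z : ℝ, 0 < z → chi0 b c τ z = 0 → l₂ ≤ z) ∧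
      ∃ ε > (0 : ℝ), ∃ ta d : ℝ,
        (l₂ < l₁ →
          (fun t => φ (t + ta) * Real.exp (-(l₂ * t)) - 1)
            =o[atBot] fun t => Real.exp (ε * t)) ∧
        (l₂ = l₁ →
          (fun t => φ (t + ta) * Real.exp (-(l₂ * t)) - (-t + d))
            =o[atBot] fun t => Real.exp (ε * t)) := by
  have P : IsProfile b c τ φ := ⟨hb, hc, hτ, hmono, hsm, heq, h0, h1⟩
  have hl := P.rate_pos
  have hmin (z : ℝ) (hz : 0 < z) (hz0 : chi0 b c τ z = 0) : IsProfile.rate φ ≤ z := by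
    by_contra! hlt
    exact (P.chi0_pos hz hlt).ne' hz0
  have hshift {A : ℝ} (hA : 0 < A) :
      Real.exp (IsProfile.rate φ * (-Real.log A / IsProfile.rate φ)) = A⁻¹ := by
    rw [mul_div_cancel₀ _ hl.ne', Real.exp_neg, Real.exp_log hA]
  refine ⟨P.deriv_pos, IsProfile.rate φ, ?_⟩
  rcases P.chi0'_rate_nonpos.lt_or_eq with hD | hD
  · obtain ⟨l₁, hlt, hl₁⟩ := P.exists_zero_gt hD
    obtain ⟨A, hA, δ, hδ, C, hC⟩ := P.exists_expansion_simple hD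
    refine ⟨l₁, hl, hlt.le, P.chi0_rate, hl₁, hmin, δ / 2, half_pos hδ,
      -Real.log A / IsProfile.rate φ, 0, fun _ => ?_, fun h => absurd h hlt.ne⟩
    have h := isLittleO_of_expansion hδ hC (-Real.log A / IsProfile.rate φ)
    rw [hshift hA] at h
    simpa [hA.ne'] using h
  · obtain ⟨A, B, hB, δ, hδ, C, hC⟩ := P.exists_expansion_double hD
    refine ⟨IsProfile.rate φ, hl, le_rfl, P.chi0_rate, P.chi0_rate, hmin, δ / 2, half_pos hδ,
      -Real.log B / IsProfile.rate φ, A / B - -Real.log B / IsProfile.rate φ,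
      fun h => absurd h (lt_irrefl _), fun _ => ?_⟩
    have h := isLittleO_of_expansion hδ hC (-Real.log B / IsProfile.rate φ)
    rw [hshift hB] at h
    refine h.congr_left fun t => ?_
    congr 1
    field_simp
    ring
end

section
/- Let b ∈ (0,1) and (τ,c) ∈ 𝔇. Then there exists a continuous, strictly negative, Lebesgue-integrable function N : ℝ → (−∞,0) such that for every bounded continuous f : ℝ → ℝ, the function φ(t) = ∫_ℝ N(t−s)·f(s) ds is the unique bounded, twice continuously differentiable solution with bounded derivatives of the equation φ''(t) − c·φ'(t) − (SBφ)(t) = f(t) for all t ∈ ℝ, where (SBφ)(t) = Σ_{j≥0} b^j·φ(t − (j+1)·c·τ). In other words, the operator 𝒟φ = φ'' − c·φ' − SBφ has an inverse integral operator with negative kernel. -/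
open Filter MeasureTheory

/-- Characteristic function χ₁(z) = z² − c·z − e^{−z·c·τ}/(1 − b·e^{−z·c·τ}). -/
noncomputable def chi1 (b c τ z : ℝ) : ℝ :=
  z ^ 2 - c * z - Real.exp (-(z * c * τ)) / (1 - b * Real.exp (-(z * c * τ)))

/-- The domain 𝔇: χ₀ has a positive real zero and χ₁ has a negative real zero. -/
def inD (b τ c : ℝ) : Prop :=
  (∃ z > (0 : ℝ), chi0 b c τ z = 0) ∧ (∃ z < (0 : ℝ), chi1 b c τ z = 0)

/-- `g` is continuous and bounded in absolute value by `C`. -/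
structure IsBC (g : ℝ → ℝ) (C : ℝ) : Prop where
  cont : Continuous g
  bound : ∀ t, |g t| ≤ C

/-- Convolution of real functions on the line. -/
noncomputable def realConv (f g : ℝ → ℝ) (t : ℝ) : ℝ := ∫ s, f s * g (t - s)

namespace IsBC

variable {f g : ℝ → ℝ} {C D : ℝ}

lemma const_mul (hg : IsBC g C) (a : ℝ) : IsBC (fun t => a * g t) (|a| * C) :=
  ⟨hg.cont.const_mul a, fun t => by
    rw [abs_mul]; exact mul_le_mul_of_nonneg_left (hg.bound t) (abs_nonneg a)⟩

lemma sub (hf : IsBC f C) (hg : IsBC g D) : IsBC (fun t => f t - g t) (C + D) :=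
  ⟨hf.cont.sub hg.cont, fun t => (abs_sub _ _).trans (add_le_add (hf.bound t) (hg.bound t))⟩

lemma integrable_mul_left (hg : IsBC g C) (hf : Integrable f) :
    Integrable fun s => f s * g s :=
  hf.mul_bdd hg.cont.aestronglyMeasurable (Eventually.of_forall hg.bound)

lemma comp_sub_left (hg : IsBC g C) (t : ℝ) : IsBC (fun s => g (t - s)) C :=
  ⟨hg.cont.comp (continuous_const.sub continuous_id), fun _ => hg.bound _⟩

lemma comp_sub_right (hg : IsBC g C) (t : ℝ) : IsBC (fun s => g (s - t)) C :=
  ⟨hg.cont.comp (continuous_id.sub continuous_const), fun _ => hg.bound _⟩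

lemma norm (hg : IsBC g C) : IsBC (fun t => ‖g t‖) C :=
  ⟨hg.cont.norm, fun t => by simpa using hg.bound t⟩

lemma integrable_realConv_integrand (hg : IsBC g C) (hf : Integrable f) (t : ℝ) :
    Integrable fun s => f s * g (t - s) :=
  (hg.comp_sub_left t).integrable_mul_left hf

lemma convolutionExistsAt (hg : IsBC g C) (hf : Integrable f) (t : ℝ) :
    ConvolutionExistsAt f g t (ContinuousLinearMap.mul ℝ ℝ) volume :=
  hg.integrable_realConv_integrand hf t

end IsBC

section RealConv

variable {f g k : ℝ → ℝ} {C D : ℝ}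

lemma realConv_eq_convolution (f g : ℝ → ℝ) :
    realConv f g = convolution f g (ContinuousLinearMap.mul ℝ ℝ) volume := rfl

lemma realConv_apply_swap (f g : ℝ → ℝ) (t : ℝ) :
    realConv f g t = ∫ s, f (t - s) * g s := by
  rw [realConv_eq_convolution, convolution_eq_swap]; rfl

lemma realConv_comm (f g : ℝ → ℝ) : realConv f g = realConv g f := by
  funext t
  rw [realConv_apply_swap]
  simp only [realConv, mul_comm]

lemma abs_realConv_le (hf : Integrable f) (hg : ∀ t, |g t| ≤ C) (t : ℝ) :
    |realConv f g t| ≤ (∫ s, |f s|) * C := by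
  rw [← integral_mul_const]
  refine norm_integral_le_of_norm_le (f := fun s => f s * g (t - s)) (hf.abs.mul_const C)
    (Eventually.of_forall fun s => ?_)
  rw [norm_mul]
  exact mul_le_mul_of_nonneg_left (hg _) (norm_nonneg _)

lemma IsBC.realConv (hg : IsBC g C) (hf : Integrable f) :
    IsBC (realConv f g) ((∫ s, |f s|) * C) := by
  refine ⟨?_, abs_realConv_le hf hg.bound⟩
  refine BddAbove.continuous_convolution_right_of_integrable
    (ContinuousLinearMap.mul ℝ ℝ) ⟨C, ?_⟩ hf hg.cont
  rintro _ ⟨x, rfl⟩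
  exact hg.bound x

lemma integrable_realConv (hf : Integrable f) (hg : Integrable g) :
    Integrable (realConv f g) :=
  hf.integrable_convolution (ContinuousLinearMap.mul ℝ ℝ) hg

lemma integral_realConv (hf : Integrable f) (hg : Integrable g) :
    ∫ t, realConv f g t = (∫ t, f t) * ∫ t, g t :=
  integral_convolution (ContinuousLinearMap.mul ℝ ℝ) hf hg

lemma realConv_nonneg (hf : ∀ t, 0 ≤ f t) (hg : ∀ t, 0 ≤ g t) (t : ℝ) : 0 ≤ realConv f g t :=
  integral_nonneg fun s => mul_nonneg (hf s) (hg _)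

lemma realConv_assoc (hf : Integrable f) (hg : Integrable g) (hgC : IsBC g D) (hk : IsBC k C) :
    realConv (realConv f g) k = realConv f (realConv g k) := by
  funext t
  let L := ContinuousLinearMap.mul ℝ ℝ
  refine convolution_assoc L L L L (fun x y z => mul_assoc x y z) hf.1 hg.1
    hk.cont.aestronglyMeasurable ?_ ?_ ?_
  · exact Eventually.of_forall (hgC.convolutionExistsAt hf)
  · exact Eventually.of_forall (hk.norm.convolutionExistsAt hg.norm)
  · exact (hk.norm.realConv hg.norm).convolutionExistsAt hf.norm t

lemma realConv_tsum {F : ℕ → ℝ → ℝ} (hF : ∀ n, Integrable (F n))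
    (hs : Summable fun n => ∫ s, |F n s|) (hg : IsBC g C) (t : ℝ) :
    HasSum (fun n => realConv (F n) g t) (realConv (fun s => ∑' n, F n s) g t) := by
  have hint n := hg.integrable_realConv_integrand (hF n) t
  have key := hasSum_integral_of_summable_integral_norm hint
    (Summable.of_nonneg_of_le (fun n => integral_nonneg fun s => norm_nonneg _)
      (fun n => ?_) (hs.mul_right C))
  · simpa only [realConv, tsum_mul_right] using key
  · rw [← integral_mul_const]
    refine integral_mono (hint n).norm ((hF n).abs.mul_const C) fun s => ?_
    rw [norm_mul]
    exact mul_le_mul_of_nonneg_left (hg.bound _) (norm_nonneg _)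

lemma integrable_tsum_of_nonneg {F : ℕ → ℝ → ℝ} (h0 : ∀ n t, 0 ≤ F n t)
    (hF : ∀ n, Integrable (F n)) (hs : Summable fun n => ∫ s, F n s)
    (hsum : ∀ t, Summable fun n => F n t) (hc : Continuous fun t => ∑' n, F n t) :
    Integrable fun t => ∑' n, F n t := by
  refine ⟨hc.aestronglyMeasurable, ?_⟩
  rw [hasFiniteIntegral_iff_ofReal (Eventually.of_forall fun t => tsum_nonneg fun n => h0 n t)]
  simp only [fun t => ENNReal.ofReal_tsum_of_nonneg (fun n => h0 n t) (hsum t)]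
  rw [lintegral_tsum fun n => (hF n).1.aemeasurable.ennreal_ofReal]
  simp only [fun n => (ofReal_integral_eq_lintegral_ofReal (hF n)
    (Eventually.of_forall (h0 n))).symm]
  exact hs.tsum_ofReal_lt_top

end RealConv

section Resolvent

variable {p H : ℝ → ℝ} {C D : ℝ}

/-- The Neumann series `∑ pⁿ ⋆ H` of a nonnegative kernel of mass less than one. -/
lemma exists_resolvent (hp0 : ∀ t, 0 ≤ p t) (hp : Integrable p) (hpC : IsBC p D)
    (hm : ∫ t, p t < 1) (hH0 : ∀ t, 0 ≤ H t) (hH : Integrable H) (hHC : IsBC H C) :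
    ∃ R : ℝ → ℝ, ∃ B, IsBC R B ∧ Integrable R ∧ (∀ t, H t ≤ R t) ∧
      ∀ t, R t = H t + realConv p R t := by
  set m := ∫ t, p t with hmdef
  have hm0 : 0 ≤ m := integral_nonneg hp0
  have hpabs : ∫ t, |p t| = m := by simp only [abs_of_nonneg (hp0 _), hmdef]
  let F : ℕ → ℝ → ℝ := fun n => (realConv p)^[n] H
  have hF_succ n : F (n + 1) = realConv p (F n) := Function.iterate_succ_apply' _ _ _
  have hF : ∀ n, (∀ t, 0 ≤ F n t) ∧ Integrable (F n) ∧ IsBC (F n) (m ^ n * C) ∧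
      ∫ t, F n t = m ^ n * ∫ t, H t := by
    intro n
    induction n with
    | zero => exact ⟨hH0, hH, by simpa [F] using hHC, by simp [F]⟩
    | succ n ih =>
      obtain ⟨h0, hi, hb, he⟩ := ih
      rw [hF_succ]
      refine ⟨realConv_nonneg hp0 h0, integrable_realConv hp hi, ?_, ?_⟩
      · have := hb.realConv hp
        rwa [hpabs, ← mul_assoc, ← pow_succ'] at this
      · rw [integral_realConv hp hi, he, pow_succ', mul_assoc]
  have hgeo := summable_geometric_of_lt_one hm0 hm
  have hsum t : Summable fun n => F n t :=
    Summable.of_norm_bounded (hgeo.mul_right C) fun n => (hF n).2.2.1.bound t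
  have hcont : Continuous fun t => ∑' n, F n t :=
    continuous_tsum (fun n => (hF n).2.2.1.cont) (hgeo.mul_right C)
      fun n t => (hF n).2.2.1.bound t
  have hsi : Summable fun n => ∫ s, F n s := by
    simp only [fun n => (hF n).2.2.2]
    exact hgeo.mul_right _
  refine ⟨fun t => ∑' n, F n t, ∑' n, m ^ n * C, ⟨hcont, fun t => ?_⟩,
    integrable_tsum_of_nonneg (fun n => (hF n).1) (fun n => (hF n).2.1) hsi hsum hcont,
    fun t => (hsum t).le_tsum 0 fun n _ => (hF n).1 t, fun t => ?_⟩
  · exact tsum_of_norm_bounded (f := fun n => F n t) (hgeo.mul_right C).hasSum fun n => (hF n).2.2.1.bound t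
  · have h1 := realConv_tsum (fun n => (hF n).2.1)
      (by simpa only [fun n t => abs_of_nonneg ((hF n).1 t)] using hsi) hpC t
    rw [realConv_comm p, ← h1.tsum_eq]
    refine (hsum t).tsum_eq_zero_add.trans ?_
    simp only [hF_succ, realConv_comm p]
    rfl

end Resolvent

lemma realConv_tsum_right {f : ℝ → ℝ} {G : ℕ → ℝ → ℝ} {C : ℕ → ℝ} (hf : Integrable f)
    (hG : ∀ n, IsBC (G n) (C n)) (hC : Summable C) (t : ℝ) :
    HasSum (fun n => realConv f (G n) t) (realConv f (fun s => ∑' n, G n s) t) := by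
  have hint n := (hG n).integrable_realConv_integrand hf t
  have key := hasSum_integral_of_summable_integral_norm hint
    (Summable.of_nonneg_of_le (fun n => integral_nonneg fun s => norm_nonneg _)
      (fun n => ?_) (hC.mul_left (∫ s, |f s|)))
  · simpa only [realConv, tsum_mul_left] using key
  · rw [← integral_mul_const]
    refine integral_mono (hint n).norm (hf.abs.mul_const (C n)) fun s => ?_
    rw [norm_mul]
    exact mul_le_mul_of_nonneg_left ((hG n).bound _) (norm_nonneg _)

section SBop

variable {b c τ : ℝ} {f g : ℝ → ℝ} {C D : ℝ}

lemma SBop_term_abs_le (hb : 0 < b) (hg : ∀ t, |g t| ≤ C) (t : ℝ) (j : ℕ) :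
    |b ^ j * g (t - ((j : ℝ) + 1) * c * τ)| ≤ b ^ j * C := by
  rw [abs_mul, abs_of_pos (pow_pos hb j)]
  exact mul_le_mul_of_nonneg_left (hg _) (pow_pos hb j).le

lemma SBop_summable (hb : b ∈ Set.Ioo (0 : ℝ) 1) (hg : ∀ t, |g t| ≤ C) (t : ℝ) :
    Summable fun j : ℕ => b ^ j * g (t - ((j : ℝ) + 1) * c * τ) :=
  Summable.of_norm_bounded ((summable_geometric_of_lt_one hb.1.le hb.2).mul_right C)
    (SBop_term_abs_le hb.1 hg t)

lemma IsBC.SBop_term (hb : 0 < b) (hg : IsBC g C) (j : ℕ) :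
    IsBC (fun t => b ^ j * g (t - ((j : ℝ) + 1) * c * τ)) (b ^ j * C) :=
  ⟨(hg.comp_sub_right _).cont.const_mul _, fun t => SBop_term_abs_le hb hg.bound t j⟩

lemma IsBC.SBop (hb : b ∈ Set.Ioo (0 : ℝ) 1) (hg : IsBC g C) :
    IsBC (SBop b c τ g) ((1 - b)⁻¹ * C) := by
  have hgeo := (summable_geometric_of_lt_one hb.1.le hb.2).mul_right C
  refine ⟨continuous_tsum (fun j => (hg.SBop_term hb.1 j).cont) hgeo
    fun j t => SBop_term_abs_le hb.1 hg.bound t j, fun t => ?_⟩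
  exact tsum_of_norm_bounded (f := fun j : ℕ => b ^ j * g (t - ((j : ℝ) + 1) * c * τ)) ((hasSum_geometric_of_lt_one hb.1.le hb.2).mul_right C)
    (SBop_term_abs_le hb.1 hg.bound t)

lemma SBop_term_integral (j : ℕ) :
    ∫ t, b ^ j * f (t - ((j : ℝ) + 1) * c * τ) = b ^ j * ∫ t, f t := by
  rw [integral_const_mul, integral_sub_right_eq_self f]

lemma SBop_summable_integral (hb : b ∈ Set.Ioo (0 : ℝ) 1) :
    Summable fun j : ℕ => ∫ t, b ^ j * f (t - ((j : ℝ) + 1) * c * τ) := by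
  simp only [SBop_term_integral]
  exact (summable_geometric_of_lt_one hb.1.le hb.2).mul_right _

lemma SBop_term_integrable (hf : Integrable f) (j : ℕ) :
    Integrable fun t => b ^ j * f (t - ((j : ℝ) + 1) * c * τ) :=
  (hf.comp_sub_right _).const_mul _

lemma SBop_term_nonneg (hb : 0 < b) (hf0 : ∀ t, 0 ≤ f t) (j : ℕ) (t : ℝ) :
    0 ≤ b ^ j * f (t - ((j : ℝ) + 1) * c * τ) :=
  mul_nonneg (pow_pos hb j).le (hf0 _)

lemma SBop_integrable (hb : b ∈ Set.Ioo (0 : ℝ) 1) (hf0 : ∀ t, 0 ≤ f t) (hf : Integrable f)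
    (hfC : IsBC f C) : Integrable (SBop b c τ f) :=
  integrable_tsum_of_nonneg (SBop_term_nonneg hb.1 hf0) (SBop_term_integrable hf)
    (SBop_summable_integral hb) (SBop_summable hb hfC.bound) (hfC.SBop hb).cont

lemma SBop_integral (hb : b ∈ Set.Ioo (0 : ℝ) 1) (hf0 : ∀ t, 0 ≤ f t) (hf : Integrable f) :
    ∫ t, SBop b c τ f t = (1 - b)⁻¹ * ∫ t, f t := by
  have key := hasSum_integral_of_summable_integral_norm
    (SBop_term_integrable (b := b) (c := c) (τ := τ) hf) ?_
  · simp only [SBop_term_integral] at key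
    exact key.unique ((hasSum_geometric_of_lt_one hb.1.le hb.2).mul_right _)
  · simpa only [Real.norm_of_nonneg (SBop_term_nonneg hb.1 hf0 _ _)]
      using SBop_summable_integral hb

lemma realConv_SBop_left (hb : b ∈ Set.Ioo (0 : ℝ) 1) (hf0 : ∀ t, 0 ≤ f t) (hf : Integrable f)
    (hg : IsBC g C) (t : ℝ) :
    realConv (SBop b c τ f) g t = SBop b c τ (realConv f g) t := by
  have key := realConv_tsum (SBop_term_integrable (b := b) (c := c) (τ := τ) hf) ?_ hg t
  · refine key.tsum_eq.symm.trans (tsum_congr fun j => ?_)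
    rw [realConv, realConv, ← integral_const_mul]
    refine Eq.trans ?_ (integral_sub_right_eq_self _ (((j : ℝ) + 1) * c * τ))
    congr 1
    funext s
    rw [sub_sub_sub_cancel_right, mul_assoc]
  · simpa only [abs_of_nonneg (SBop_term_nonneg hb.1 hf0 _ _)]
      using SBop_summable_integral hb

lemma realConv_SBop_right (hb : b ∈ Set.Ioo (0 : ℝ) 1) (hf : Integrable f)
    (hg : IsBC g C) (t : ℝ) :
    realConv f (SBop b c τ g) t = SBop b c τ (realConv f g) t := by
  have key := realConv_tsum_right hf (hg.SBop_term (b := b) (c := c) (τ := τ) hb.1)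
    ((summable_geometric_of_lt_one hb.1.le hb.2).mul_right C) t
  refine key.tsum_eq.symm.trans (tsum_congr fun j => ?_)
  rw [realConv, realConv, ← integral_const_mul]
  congr 1
  funext s
  rw [mul_left_comm, sub_right_comm]

end SBop

section Exponential

variable {α γ C : ℝ} {g k : ℝ → ℝ}

lemma hasDerivAt_integral_Iic (hk : Continuous k) (hi : ∀ t, IntegrableOn k (Set.Iic t)) (t : ℝ) :
    HasDerivAt (fun t => ∫ s in Set.Iic t, k s) (k t) t := by
  have h : (fun t => ∫ s in Set.Iic t, k s) =
      fun t => (∫ s in Set.Iic 0, k s) + ∫ s in (0 : ℝ)..t, k s := by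
    funext t
    rw [← intervalIntegral.integral_Iic_sub_Iic (hi 0) (hi t)]
    ring
  rw [h]
  exact (intervalIntegral.integral_hasDerivAt_right (hk.intervalIntegrable _ _)
    hk.stronglyMeasurable.stronglyMeasurableAtFilter hk.continuousAt).const_add _

lemma hasDerivAt_integral_Ioi (hk : Continuous k) (hi : ∀ t, IntegrableOn k (Set.Ioi t)) (t : ℝ) :
    HasDerivAt (fun t => ∫ s in Set.Ioi t, k s) (-k t) t := by
  have h : (fun t => ∫ s in Set.Ioi t, k s) =
      fun t => (∫ s in Set.Ioi 0, k s) - ∫ s in (0 : ℝ)..t, k s := by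
    funext t
    rw [← intervalIntegral.integral_interval_add_Ioi (hi 0) (hi t)]
    ring
  rw [h]
  exact (intervalIntegral.integral_hasDerivAt_right (hk.intervalIntegrable _ _)
    hk.stronglyMeasurable.stronglyMeasurableAtFilter hk.continuousAt).const_sub _

lemma exp_mul_setIntegral_abs_le {S : Set ℝ} {a t : ℝ}
    (hS : IntegrableOn (fun s => Real.exp (-a * s)) S) (hg : IsBC g C) :
    |Real.exp (a * t) * ∫ s in S, Real.exp (-a * s) * g s| ≤
      Real.exp (a * t) * ((∫ s in S, Real.exp (-a * s)) * C) := by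
  rw [abs_mul, abs_of_pos (Real.exp_pos _)]
  refine mul_le_mul_of_nonneg_left ?_ (Real.exp_pos _).le
  rw [← integral_mul_const]
  refine norm_integral_le_of_norm_le (f := fun s => Real.exp (-a * s) * g s)
    (hS.mul_const C) (Eventually.of_forall fun s => ?_)
  rw [norm_mul, Real.norm_of_nonneg (Real.exp_pos _).le]
  exact mul_le_mul_of_nonneg_left (hg.bound s) (Real.exp_pos _).le

/-- The bounded solution of `v' = α v + g` for `α < 0`. -/
noncomputable def causalExp (α : ℝ) (g : ℝ → ℝ) (t : ℝ) : ℝ :=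
  Real.exp (α * t) * ∫ s in Set.Iic t, Real.exp (-α * s) * g s

/-- The bounded solution of `v' = γ v - g` for `0 < γ`. -/
noncomputable def anticausalExp (γ : ℝ) (g : ℝ → ℝ) (t : ℝ) : ℝ :=
  Real.exp (γ * t) * ∫ s in Set.Ioi t, Real.exp (-γ * s) * g s

lemma hasDerivAt_exp_const_mul (a t : ℝ) :
    HasDerivAt (fun t => Real.exp (a * t)) (a * Real.exp (a * t)) t := by
  simpa [mul_comm] using ((hasDerivAt_id t).const_mul a).exp

lemma integrableOn_exp_mul_Iic_mul (hα : α < 0) (hg : IsBC g C) (t : ℝ) :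
    IntegrableOn (fun s => Real.exp (-α * s) * g s) (Set.Iic t) :=
  Integrable.mul_bdd (integrableOn_exp_mul_Iic (neg_pos.2 hα) t)
    hg.cont.aestronglyMeasurable (Eventually.of_forall hg.bound)

lemma integrableOn_exp_mul_Ioi_mul (hγ : 0 < γ) (hg : IsBC g C) (t : ℝ) :
    IntegrableOn (fun s => Real.exp (-γ * s) * g s) (Set.Ioi t) :=
  Integrable.mul_bdd (integrableOn_exp_mul_Ioi (neg_neg_of_pos hγ) t)
    hg.cont.aestronglyMeasurable (Eventually.of_forall hg.bound)

lemma hasDerivAt_causalExp (hα : α < 0) (hg : IsBC g C) (t : ℝ) :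
    HasDerivAt (causalExp α g) (α * causalExp α g t + g t) t := by
  have hgc := hg.cont
  have h := (hasDerivAt_exp_const_mul α t).mul (hasDerivAt_integral_Iic
    (k := fun s => Real.exp (-α * s) * g s) (by fun_prop) (integrableOn_exp_mul_Iic_mul hα hg) t)
  refine h.congr_deriv ?_
  rw [← mul_assoc (Real.exp _) (Real.exp _), ← Real.exp_add]
  simp [causalExp, mul_assoc]

lemma hasDerivAt_anticausalExp (hγ : 0 < γ) (hg : IsBC g C) (t : ℝ) :
    HasDerivAt (anticausalExp γ g) (γ * anticausalExp γ g t - g t) t := by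
  have hgc := hg.cont
  have h := (hasDerivAt_exp_const_mul γ t).mul (hasDerivAt_integral_Ioi
    (k := fun s => Real.exp (-γ * s) * g s) (by fun_prop) (integrableOn_exp_mul_Ioi_mul hγ hg) t)
  refine h.congr_deriv ?_
  rw [mul_neg, ← mul_assoc (Real.exp _) (Real.exp _), ← Real.exp_add]
  simp [anticausalExp, mul_assoc, sub_eq_add_neg]

lemma IsBC.causalExp (hα : α < 0) (hg : IsBC g C) : IsBC (causalExp α g) (C / -α) := by
  refine ⟨continuous_iff_continuousAt.2 fun t => (hasDerivAt_causalExp hα hg t).continuousAt,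
    fun t => ?_⟩
  refine (exp_mul_setIntegral_abs_le
    (integrableOn_exp_mul_Iic (neg_pos.2 hα) t) hg).trans_eq ?_
  rw [integral_exp_mul_Iic (neg_pos.2 hα), div_mul_eq_mul_div, ← mul_div_assoc, ← mul_assoc,
    ← Real.exp_add]
  simp

lemma IsBC.anticausalExp (hγ : 0 < γ) (hg : IsBC g C) : IsBC (anticausalExp γ g) (C / γ) := by
  refine ⟨continuous_iff_continuousAt.2 fun t => (hasDerivAt_anticausalExp hγ hg t).continuousAt,
    fun t => ?_⟩
  refine (exp_mul_setIntegral_abs_le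
    (integrableOn_exp_mul_Ioi (neg_neg_of_pos hγ) t) hg).trans_eq ?_
  rw [integral_exp_mul_Ioi (neg_neg_of_pos hγ), neg_div_neg_eq, div_mul_eq_mul_div,
    ← mul_div_assoc, ← mul_assoc, ← Real.exp_add]
  simp

end Exponential

section Green

variable {α γ C : ℝ} {g : ℝ → ℝ}

/-- The Green function of `-(∂ - α)(∂ - γ)` for `α < 0 < γ`. -/
noncomputable def greenKernel (α γ t : ℝ) : ℝ :=
  (γ - α)⁻¹ * Real.exp (min (γ * t) (α * t))

lemma greenKernel_pos (h : α < γ) (t : ℝ) : 0 < greenKernel α γ t :=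
  mul_pos (inv_pos.2 (sub_pos.2 h)) (Real.exp_pos _)

lemma greenKernel_of_nonneg (h : α < γ) {t : ℝ} (ht : 0 ≤ t) :
    greenKernel α γ t = (γ - α)⁻¹ * Real.exp (α * t) := by
  rw [greenKernel, min_eq_right (mul_le_mul_of_nonneg_right h.le ht)]

lemma greenKernel_of_nonpos (h : α < γ) {t : ℝ} (ht : t ≤ 0) :
    greenKernel α γ t = (γ - α)⁻¹ * Real.exp (γ * t) := by
  rw [greenKernel, min_eq_left (mul_le_mul_of_nonpos_right h.le ht)]

lemma greenKernel_isBC (hα : α < 0) (hγ : 0 < γ) : IsBC (greenKernel α γ) (γ - α)⁻¹ := by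
  have h : α < γ := hα.trans hγ
  have hK : 0 < (γ - α)⁻¹ := inv_pos.2 (sub_pos.2 h)
  refine ⟨by unfold greenKernel; fun_prop, fun t => ?_⟩
  rw [abs_of_pos (greenKernel_pos h t)]
  refine mul_le_of_le_one_right hK.le (Real.exp_le_one_iff.2 ?_)
  rcases le_total 0 t with ht | ht
  · exact (min_le_right _ _).trans (mul_nonpos_of_nonpos_of_nonneg hα.le ht)
  · exact (min_le_left _ _).trans (mul_nonpos_of_nonneg_of_nonpos hγ.le ht)

lemma greenKernel_shift_le (h : α < γ) {r : ℝ} (hr : 0 ≤ r) (t : ℝ) :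
    greenKernel α γ (t - r) ≤ Real.exp (-(α * r)) * greenKernel α γ t := by
  rw [greenKernel, greenKernel, mul_left_comm, ← Real.exp_add]
  refine mul_le_mul_of_nonneg_left (Real.exp_le_exp.2 ?_) (inv_pos.2 (sub_pos.2 h)).le
  rw [← min_add_add_left]
  refine min_le_min ?_ ?_ <;> nlinarith

lemma greenKernel_integrableOn_Iic (hα : α < 0) (hγ : 0 < γ) :
    IntegrableOn (greenKernel α γ) (Set.Iic 0) :=
  IntegrableOn.congr_fun ((integrableOn_exp_mul_Iic hγ 0).const_mul (γ - α)⁻¹)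
    (fun _ ht => (greenKernel_of_nonpos (hα.trans hγ) ht).symm) measurableSet_Iic

lemma greenKernel_integrableOn_Ioi (hα : α < 0) (hγ : 0 < γ) :
    IntegrableOn (greenKernel α γ) (Set.Ioi 0) :=
  IntegrableOn.congr_fun ((integrableOn_exp_mul_Ioi hα 0).const_mul (γ - α)⁻¹)
    (fun _ ht => (greenKernel_of_nonneg (hα.trans hγ) (le_of_lt ht)).symm) measurableSet_Ioi

lemma greenKernel_integrable (hα : α < 0) (hγ : 0 < γ) : Integrable (greenKernel α γ) := by
  rw [← integrableOn_univ, ← Set.Iic_union_Ioi (a := (0 : ℝ))]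
  exact (greenKernel_integrableOn_Iic hα hγ).union (greenKernel_integrableOn_Ioi hα hγ)

lemma greenKernel_integral (hα : α < 0) (hγ : 0 < γ) :
    ∫ t, greenKernel α γ t = (-α * γ)⁻¹ := by
  have h : α < γ := hα.trans hγ
  rw [← intervalIntegral.integral_Iic_add_Ioi (greenKernel_integrableOn_Iic hα hγ)
      (greenKernel_integrableOn_Ioi hα hγ),
    setIntegral_congr_fun measurableSet_Iic fun _ ht => greenKernel_of_nonpos h ht,
    setIntegral_congr_fun measurableSet_Ioi fun _ ht => greenKernel_of_nonneg h (le_of_lt ht),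
    integral_const_mul, integral_const_mul, integral_exp_mul_Iic hγ, integral_exp_mul_Ioi hα]
  have := sub_pos.2 h
  have := hα.ne
  simp only [mul_zero, Real.exp_zero]
  field_simp
  ring

lemma realConv_greenKernel (hα : α < 0) (hγ : 0 < γ) (hg : IsBC g C) (t : ℝ) :
    realConv (greenKernel α γ) g t =
      (γ - α)⁻¹ * (causalExp α g t + anticausalExp γ g t) := by
  have h : α < γ := hα.trans hγ
  have hint : Integrable fun s => greenKernel α γ (t - s) * g s :=
    hg.integrable_mul_left ((greenKernel_integrable hα hγ).comp_sub_left t)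
  rw [realConv_apply_swap,
    ← intervalIntegral.integral_Iic_add_Ioi (b := t) hint.integrableOn hint.integrableOn, mul_add,
    causalExp, anticausalExp]
  simp only [← integral_const_mul]
  congr 1
  · refine setIntegral_congr_fun measurableSet_Iic fun s hs => ?_
    simp only [greenKernel_of_nonneg h (sub_nonneg.2 hs)]
    rw [← mul_assoc (Real.exp _), ← Real.exp_add, mul_assoc]
    ring_nf
  · refine setIntegral_congr_fun measurableSet_Ioi fun s hs => ?_
    simp only [greenKernel_of_nonpos h (sub_nonpos.2 (le_of_lt hs))]
    rw [← mul_assoc (Real.exp _), ← Real.exp_add, mul_assoc]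
    ring_nf

/-- A bounded source convolved with the Green function gives a bounded solution. -/
lemma realConv_greenKernel_solves (hα : α < 0) (hγ : 0 < γ) (hg : IsBC g C) :
    ∃ u₁ u₂ : ℝ → ℝ, ∃ B₁ B₂, IsBC u₁ B₁ ∧ IsBC u₂ B₂ ∧
      (∀ t, HasDerivAt (realConv (greenKernel α γ) g) (u₁ t) t) ∧
      (∀ t, HasDerivAt u₁ (u₂ t) t) ∧
      ∀ t, u₂ t - (α + γ) * u₁ t + α * γ * realConv (greenKernel α γ) g t = -g t := by
  have hne : γ - α ≠ 0 := (sub_pos.2 (hα.trans hγ)).ne'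
  have hp := hg.causalExp hα
  have hq := hg.anticausalExp hγ
  have hp' := hasDerivAt_causalExp hα hg
  have hq' := hasDerivAt_anticausalExp hγ hg
  have hu := funext (realConv_greenKernel hα hγ hg)
  have hα' := (((hp.const_mul α).sub (hq.const_mul (-γ))).const_mul (γ - α)⁻¹)
  have hγ' := ((((hp.const_mul (α ^ 2)).sub (hq.const_mul (-γ ^ 2))).const_mul (γ - α)⁻¹).sub hg)
  refine ⟨_, _, _, _, hα', hγ', fun t => ?_, fun t => ?_, fun t => ?_⟩
  · rw [hu]
    refine (((hp' t).add (hq' t)).const_mul (γ - α)⁻¹).congr_deriv ?_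
    ring
  · refine ((((hp' t).const_mul α).sub ((hq' t).const_mul (-γ))).const_mul (γ - α)⁻¹).congr_deriv ?_
    field_simp
    ring
  · rw [hu]
    ring

lemma eq_zero_of_bounded_of_hasDerivAt {a : ℝ} (ha : a ≠ 0) {v : ℝ → ℝ}
    (hv : ∀ t, HasDerivAt v (a * v t) t) (hb : ∀ t, |v t| ≤ C) (t : ℝ) : v t = 0 := by
  have hd (s : ℝ) : HasDerivAt (fun s => Real.exp (-a * s) * v s) 0 s :=
    ((hasDerivAt_exp_const_mul (-a) s).mul (hv s)).congr_deriv (by ring)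
  have hconst (s : ℝ) : Real.exp (-a * s) * v s = Real.exp (-a * t) * v t :=
    is_const_of_deriv_eq_zero (fun s => (hd s).differentiableAt) (fun s => (hd s).deriv) s t
  have hv_eq (s : ℝ) : |v t| * Real.exp (a * (s - t)) ≤ C := by
    have : v s = v t * Real.exp (a * (s - t)) := by
      have h1 : Real.exp (a * s) * Real.exp (-a * s) = 1 := by rw [← Real.exp_add]; simp
      calc v s = Real.exp (a * s) * (Real.exp (-a * s) * v s) := by rw [← mul_assoc, h1, one_mul]
        _ = v t * (Real.exp (a * s) * Real.exp (-a * t)) := by rw [hconst]; ring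
        _ = _ := by rw [← Real.exp_add]; ring_nf
    calc _ = |v s| := by rw [this, abs_mul, abs_of_pos (Real.exp_pos _)]
      _ ≤ C := hb s
  by_contra hne
  have hpos := abs_pos.2 hne
  have h := hv_eq (t + C / |v t| / a)
  rw [add_sub_cancel_left, mul_div_cancel₀ _ ha] at h
  have h2 := Real.add_one_le_exp (C / |v t|)
  have h3 := mul_le_mul_of_nonneg_left h2 hpos.le
  rw [mul_add, mul_div_cancel₀ _ hpos.ne', mul_one] at h3
  linarith

lemma eq_zero_of_bounded_of_second_order (hα : α < 0) (hγ : 0 < γ) {v v₁ v₂ : ℝ → ℝ} {B : ℝ}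
    (hv : ∀ t, HasDerivAt v (v₁ t) t) (hv₁ : ∀ t, HasDerivAt v₁ (v₂ t) t)
    (hb : ∀ t, |v t| ≤ C) (hb₁ : ∀ t, |v₁ t| ≤ B)
    (heq : ∀ t, v₂ t - (α + γ) * v₁ t + α * γ * v t = 0) (t : ℝ) : v t = 0 := by
  have hw (t : ℝ) : v₁ t - α * v t = 0 := by
    refine eq_zero_of_bounded_of_hasDerivAt (v := fun t => v₁ t - α * v t) (C := B + |α| * C)
      hγ.ne' (fun t => ?_) (fun t => ?_) t
    · exact ((hv₁ t).sub ((hv t).const_mul α)).congr_deriv (by linarith [heq t])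
    · refine (abs_sub _ _).trans (add_le_add (hb₁ t) ?_)
      rw [abs_mul]
      exact mul_le_mul_of_nonneg_left (hb t) (abs_nonneg α)
  exact eq_zero_of_bounded_of_hasDerivAt hα.ne
    (fun t => (hv t).congr_deriv (by linarith [hw t])) hb t

end Green

section Main

variable {b c τ α : ℝ}

lemma realConv_sub_right {f g k : ℝ → ℝ} {C D : ℝ} (hf : Integrable f) (hg : IsBC g C)
    (hk : IsBC k D) (t : ℝ) :
    realConv f (fun s => g s - k s) t = realConv f g t - realConv f k t := by
  rw [realConv, realConv, realConv, ← integral_sub (hg.integrable_realConv_integrand hf t)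
    (hk.integrable_realConv_integrand hf t)]
  simp only [mul_sub]

lemma realConv_sub_left {f g k : ℝ → ℝ} {C : ℝ} (hf : Integrable f) (hg : Integrable g)
    (hk : IsBC k C) (t : ℝ) :
    realConv (fun s => f s - g s) k t = realConv f k t - realConv g k t := by
  rw [realConv, realConv, realConv, ← integral_sub (hk.integrable_realConv_integrand hf t)
    (hk.integrable_realConv_integrand hg t)]
  simp only [sub_mul]

lemma realConv_const_mul_right (f g : ℝ → ℝ) (a t : ℝ) :
    realConv f (fun s => a * g s) t = a * realConv f g t := by
  simp only [realConv, ← integral_const_mul, mul_left_comm]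

lemma realConv_const_mul_left (f g : ℝ → ℝ) (a t : ℝ) :
    realConv (fun s => a * f s) g t = a * realConv f g t := by
  simp only [realConv, ← integral_const_mul, mul_assoc]

/-- A negative zero of `chi1` lies to the right of the pole of `chi1`. -/
lemma chi1_root (hc : 0 < c) (hα : α < 0)
    (h : chi1 b c τ α = 0) :
    b * Real.exp (-(α * c * τ)) < 1 ∧
      Real.exp (-(α * c * τ)) / (1 - b * Real.exp (-(α * c * τ))) = -α * (c - α) := by
  rw [chi1] at h
  refine ⟨?_, by linarith⟩
  by_contra! hq
  have h1 : Real.exp (-(α * c * τ)) / (1 - b * Real.exp (-(α * c * τ))) ≤ 0 :=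
    div_nonpos_of_nonneg_of_nonpos (Real.exp_pos _).le (by linarith)
  nlinarith [mul_pos hc (neg_pos.2 hα), sq_nonneg α]

/-- The difference `A H - SB H`, where `H` is the Green function attached to a zero `α` of
`chi1` and `A = -α (c - α)`. -/
noncomputable def perturbKernel (b c τ α t : ℝ) : ℝ :=
  -α * (c - α) * greenKernel α (c - α) t - SBop b c τ (greenKernel α (c - α)) t

lemma perturbKernel_nonneg (hb : b ∈ Set.Ioo (0 : ℝ) 1) (hτ : 0 < τ) (hc : 0 < c) (hα : α < 0)
    (h : chi1 b c τ α = 0) (t : ℝ) : 0 ≤ perturbKernel b c τ α t := by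
  have hγ : 0 < c - α := by linarith
  obtain ⟨hq, hA⟩ := chi1_root hc hα h
  rw [perturbKernel, sub_nonneg, ← hA]
  have hgeo := ((hasSum_geometric_of_lt_one (mul_pos hb.1 (Real.exp_pos _)).le hq).mul_left
    (Real.exp (-(α * c * τ)))).mul_right (greenKernel α (c - α) t)
  rw [← div_eq_mul_inv] at hgeo
  refine hasSum_le (fun j => ?_)
    (SBop_summable hb (greenKernel_isBC hα hγ).bound t).hasSum hgeo
  have h1 := greenKernel_shift_le (hα.trans hγ)
    (r := ((j : ℝ) + 1) * c * τ) (by positivity) t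
  refine (mul_le_mul_of_nonneg_left h1 (pow_pos hb.1 j).le).trans_eq ?_
  rw [show -(α * (((j : ℝ) + 1) * c * τ)) = j * (-(α * c * τ)) + -(α * c * τ) by ring,
    Real.exp_add, Real.exp_nat_mul, mul_pow]
  ring

lemma perturbKernel_isBC (hb : b ∈ Set.Ioo (0 : ℝ) 1) (hc : 0 < c) (hα : α < 0) :
    ∃ D, IsBC (perturbKernel b c τ α) D := by
  have hH := greenKernel_isBC hα (show 0 < c - α by linarith)
  exact ⟨_, (hH.const_mul (-α * (c - α))).sub (hH.SBop hb)⟩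

lemma SBop_greenKernel_integrable (hb : b ∈ Set.Ioo (0 : ℝ) 1) (hc : 0 < c) (hα : α < 0) :
    Integrable (SBop b c τ (greenKernel α (c - α))) := by
  have hγ : 0 < c - α := by linarith
  exact SBop_integrable hb (fun t => (greenKernel_pos (hα.trans hγ) t).le)
    (greenKernel_integrable hα hγ) (greenKernel_isBC hα hγ)

lemma perturbKernel_integrable (hb : b ∈ Set.Ioo (0 : ℝ) 1) (hc : 0 < c) (hα : α < 0) :
    Integrable (perturbKernel b c τ α) :=
  ((greenKernel_integrable hα (by linarith)).const_mul _).sub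
    (SBop_greenKernel_integrable hb hc hα)

lemma perturbKernel_integral_lt_one (hb : b ∈ Set.Ioo (0 : ℝ) 1) (hc : 0 < c) (hα : α < 0) :
    ∫ t, perturbKernel b c τ α t < 1 := by
  have hγ : 0 < c - α := by linarith
  have hA : 0 < -α * (c - α) := mul_pos (neg_pos.2 hα) hγ
  simp only [perturbKernel]
  rw [integral_sub ((greenKernel_integrable hα hγ).const_mul _)
      (SBop_greenKernel_integrable hb hc hα), integral_const_mul,
    SBop_integral hb (fun t => (greenKernel_pos (hα.trans hγ) t).le)
      (greenKernel_integrable hα hγ), greenKernel_integral hα hγ, mul_inv_cancel₀ hA.ne']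
  have := mul_pos (inv_pos.2 (sub_pos.2 hb.2)) (inv_pos.2 hA)
  linarith

lemma realConv_perturbKernel (hb : b ∈ Set.Ioo (0 : ℝ) 1) (hc : 0 < c) (hα : α < 0)
    {φ : ℝ → ℝ} {C : ℝ} (hφ : IsBC φ C) (t : ℝ) :
    realConv (perturbKernel b c τ α) φ t =
      realConv (greenKernel α (c - α)) (fun s => -α * (c - α) * φ s - SBop b c τ φ s) t := by
  have hγ : 0 < c - α := by linarith
  have hH := greenKernel_integrable hα hγ
  rw [realConv_sub_right hH (hφ.const_mul _) (hφ.SBop hb), realConv_const_mul_right,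
    realConv_SBop_right hb hH hφ, ← realConv_SBop_left hb
      (fun t => (greenKernel_pos (hα.trans hγ) t).le) hH hφ, ← realConv_const_mul_left]
  exact realConv_sub_left (hH.const_mul _) (SBop_greenKernel_integrable hb hc hα) hφ t

/-- Bounded `C²` solutions of `φ'' - cφ' - SBφ = f` are fixed points of an integral equation. -/
lemma eq_realConv_of_solution (hb : b ∈ Set.Ioo (0 : ℝ) 1) (hc : 0 < c) (hα : α < 0)
    {f ψ : ℝ → ℝ} {C D B : ℝ} (hf : IsBC f C) (hψ : ContDiff ℝ 2 ψ)
    (hψD : ∀ t, |ψ t| ≤ D) (hψB : ∀ t, |deriv ψ t| ≤ B)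
    (heq : ∀ t, deriv (deriv ψ) t - c * deriv ψ t - SBop b c τ ψ t = f t) (t : ℝ) :
    ψ t = realConv (perturbKernel b c τ α) ψ t - realConv (greenKernel α (c - α)) f t := by
  have hγ : 0 < c - α := by linarith
  have hψbc : IsBC ψ D := ⟨hψ.continuous, hψD⟩
  have hsrc := (hψbc.const_mul (-α * (c - α))).sub (hψbc.SBop (c := c) (τ := τ) hb)
  rw [realConv_perturbKernel hb hc hα hψbc,
    ← realConv_sub_right (greenKernel_integrable hα hγ) hsrc hf]
  obtain ⟨u₁, u₂, B₁, B₂, hu₁, -, hd, hd₁, hu⟩ := realConv_greenKernel_solves hα hγ (hsrc.sub hf)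
  have hub := (hsrc.sub hf).realConv (greenKernel_integrable hα hγ)
  have hψ1 : ContDiff ℝ 1 (deriv ψ) := by
    have : ContDiff ℝ (1 + 1) ψ := by simpa [one_add_one_eq_two] using hψ
    exact (contDiff_succ_iff_deriv.1 this).2.2
  refine sub_eq_zero.1 (eq_zero_of_bounded_of_second_order hα hγ
    (fun t => ((hψ.differentiable (by norm_num) t).hasDerivAt.sub (hd t)))
    (fun t => ((hψ1.differentiable (by norm_num) t).hasDerivAt.sub (hd₁ t)))
    (hψbc.sub hub).bound (fun t => (abs_sub _ _).trans (add_le_add (hψB t) (hu₁.bound t)))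
    (fun t => ?_) t)
  rw [Pi.sub_apply]
  linear_combination heq t - hu t

/-- Bounded fixed points of the integral equation solve `φ'' - cφ' - SBφ = f`. -/
lemma solution_of_eq_realConv (hb : b ∈ Set.Ioo (0 : ℝ) 1) (hc : 0 < c) (hα : α < 0)
    {f φ : ℝ → ℝ} {C D : ℝ} (hf : IsBC f C) (hφ : IsBC φ D)
    (hfix : ∀ t, φ t =
      realConv (perturbKernel b c τ α) φ t - realConv (greenKernel α (c - α)) f t) :
    ContDiff ℝ 2 φ ∧
      (∃ C : ℝ, ∀ t, |φ t| ≤ C ∧ |deriv φ t| ≤ C ∧ |deriv (deriv φ) t| ≤ C) ∧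
      ∀ t, deriv (deriv φ) t - c * deriv φ t - SBop b c τ φ t = f t := by
  have hγ : 0 < c - α := by linarith
  have hsrc := (hφ.const_mul (-α * (c - α))).sub (hφ.SBop (c := c) (τ := τ) hb)
  obtain ⟨u₁, u₂, B₁, B₂, hu₁, hu₂, hd, hd₁, hu⟩ :=
    realConv_greenKernel_solves hα hγ (hsrc.sub hf)
  have hfix' : φ = realConv (greenKernel α (c - α))
      (fun t => (-α * (c - α) * φ t - SBop b c τ φ t) - f t) := by
    funext t
    rw [realConv_sub_right (greenKernel_integrable hα hγ) hsrc hf,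
      ← realConv_perturbKernel hb hc hα hφ, ← hfix]
  rw [← hfix'] at hd hu
  have e₁ : deriv φ = u₁ := funext fun t => (hd t).deriv
  have e₂ : deriv u₁ = u₂ := funext fun t => (hd₁ t).deriv
  refine ⟨?_, ⟨max D (max B₁ B₂), fun t => ?_⟩, fun t => ?_⟩
  · rw [← one_add_one_eq_two, contDiff_succ_iff_deriv]
    refine ⟨fun t => (hd t).differentiableAt, by simp, ?_⟩
    rw [e₁, contDiff_one_iff_deriv, e₂]
    exact ⟨fun t => (hd₁ t).differentiableAt, hu₂.cont⟩
  · rw [e₁, e₂]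
    exact ⟨(hφ.bound t).trans (le_max_left _ _),
      (hu₁.bound t).trans ((le_max_left _ _).trans (le_max_right _ _)),
      (hu₂.bound t).trans ((le_max_right _ _).trans (le_max_right _ _))⟩
  · rw [e₁, e₂]
    linear_combination hu t

lemma eq_zero_of_eq_realConv {p d : ℝ → ℝ} {C : ℝ} (hp0 : ∀ t, 0 ≤ p t) (hp : Integrable p)
    (hm : ∫ t, p t < 1) (hd : IsBC d C) (h : ∀ t, d t = realConv p d t) (t : ℝ) : d t = 0 := by
  set m := ∫ t, p t with hmdef
  have hpabs : ∫ t, |p t| = m := by simp only [abs_of_nonneg (hp0 _), hmdef]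
  have hn (n : ℕ) : ∀ t, |d t| ≤ m ^ n * C := by
    induction n with
    | zero => simpa using hd.bound
    | succ n ih =>
      intro t
      rw [h t, pow_succ', mul_assoc, ← hpabs]
      rw [← hpabs] at ih
      exact abs_realConv_le hp ih t
  have hlim := (tendsto_pow_atTop_nhds_zero_of_lt_one (integral_nonneg hp0) hm).mul_const C
  rw [zero_mul] at hlim
  exact abs_nonpos_iff.1 (ge_of_tendsto' hlim fun n => hn n t)

end Main

/-- For `(τ,c) ∈ 𝔇` the operator `𝒟φ = φ'' − cφ' − SBφ` has an inverse
integral operator with a continuous, strictly negative, integrable kernel `N`: for every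
bounded continuous `f`, `φ(t) = ∫_ℝ N(t−s) f(s) ds` is the unique bounded `C²` solution
(with bounded derivatives) of `φ'' − cφ' − SBφ = f`. -/
theorem inverse_kernel_exists (b c τ : ℝ) (hb : b ∈ Set.Ioo (0 : ℝ) 1)
    (hτ : 0 < τ) (hc : 0 < c) (hD : inD b τ c) :
    ∃ N : ℝ → ℝ, Continuous N ∧ (∀ t, N t < 0) ∧ Integrable N ∧
      ∀ f : ℝ → ℝ, Continuous f → (∃ C : ℝ, ∀ t, |f t| ≤ C) →
        (∀ t : ℝ, Integrable fun s => N (t - s) * f s) ∧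
        (let φ : ℝ → ℝ := fun t => ∫ s : ℝ, N (t - s) * f s
         ContDiff ℝ 2 φ ∧
         (∃ C : ℝ, ∀ t, |φ t| ≤ C ∧ |deriv φ t| ≤ C ∧ |deriv (deriv φ) t| ≤ C) ∧
         (∀ t : ℝ, deriv (deriv φ) t - c * deriv φ t - SBop b c τ φ t = f t) ∧
         ∀ ψ : ℝ → ℝ, ContDiff ℝ 2 ψ →
           (∃ C : ℝ, ∀ t, |ψ t| ≤ C ∧ |deriv ψ t| ≤ C ∧ |deriv (deriv ψ) t| ≤ C) →
           (∀ t : ℝ, deriv (deriv ψ) t - c * deriv ψ t - SBop b c τ ψ t = f t) →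
           ψ = φ) := by
  obtain ⟨-, α, hα, hroot⟩ := hD
  have hγ : 0 < c - α := by linarith
  have hHpos := greenKernel_pos (hα.trans hγ)
  have hH := greenKernel_integrable hα hγ
  have hHbc := greenKernel_isBC hα hγ
  have hp0 := perturbKernel_nonneg hb hτ hc hα hroot
  have hp := perturbKernel_integrable (τ := τ) hb hc hα
  have hm := perturbKernel_integral_lt_one (τ := τ) hb hc hα
  obtain ⟨D, hpD⟩ := perturbKernel_isBC (τ := τ) hb hc hα
  obtain ⟨R, B, hRB, hR, hHR, hRfix⟩ :=
    exists_resolvent hp0 hp hpD hm (fun t => (hHpos t).le) hH hHbc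
  refine ⟨fun t => -R t, hRB.cont.neg, fun t => neg_neg_of_pos ((hHpos t).trans_le (hHR t)),
    hR.neg, fun f hfc ⟨C, hfC⟩ => ?_⟩
  have hf : IsBC f C := ⟨hfc, hfC⟩
  refine ⟨fun t => hf.integrable_mul_left (hR.neg.comp_sub_left t), ?_⟩
  intro φ
  have hφ_eq : φ = fun t => -1 * realConv R f t := by
    funext t
    simp only [φ, realConv_apply_swap, neg_mul, integral_neg, one_mul]
  have hφ := (hf.realConv hR).const_mul (-1)
  rw [← hφ_eq] at hφ
  have hfix (t : ℝ) : φ t =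
      realConv (perturbKernel b c τ α) φ t - realConv (greenKernel α (c - α)) f t := by
    have hR_sub : greenKernel α (c - α) = fun t => R t - realConv (perturbKernel b c τ α) R t := by
      funext t
      linarith [hRfix t]
    rw [hR_sub, realConv_sub_left hR (integrable_realConv hp hR) hf,
      realConv_assoc hp hR hRB hf, hφ_eq, realConv_const_mul_right]
    ring
  obtain ⟨h1, h2, h3⟩ := solution_of_eq_realConv hb hc hα hf hφ hfix
  refine ⟨h1, h2, h3, fun ψ hψ ⟨E, hE⟩ hψeq => funext fun t => ?_⟩
  have hψbc : IsBC ψ E := ⟨hψ.continuous, fun t => (hE t).1⟩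
  have hψfix := eq_realConv_of_solution hb hc hα hf hψ (fun t => (hE t).1)
    (fun t => (hE t).2.1) hψeq
  refine sub_eq_zero.1 (eq_zero_of_eq_realConv hp0 hp hm (hψbc.sub hφ) (fun t => ?_) t)
  rw [realConv_sub_right hp hψbc hφ]
  linear_combination hψfix t - hfix t
end
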